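/- Fix signs σ₅, σ₆ ∈ {+1, −1}. For every ε > 0 there is a constant C(ε) > 0 such that for all real numbers N₁, …, N₇ ≥ 2 and all Δ > 0, the number of 7-tuples of positive integers (n₁,…,n₇) with n_j ~ N_j for j = 1,…,7 satisfying 0 < |√n₁ + √n₂ + √n₃ + √n₄ + σ₅·√n₅ + σ₆·√n₆ − √n₇| < Δ is at most C(ε) · ∏_{j=1}^{7} (Δ^{1/7}·N_j^{13/14} + N_j^{5/7})·N_j^{ε}. -/

import Mathlib

/-!
By Hölder's inequality for a Gaussian weight of width `1/Δ`, the count is governed by the moments of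
the sums `∑ e(t √n)`, `n ~ N`, and hence by their fourth moment: the number of quadruples `n ~ N`
with `√a + √b - √c - √d = O(N^(-3/2))` has to be bounded by `N^(2 + ε)`.

Such a quadruple is an integer point of `ℤ⁴`, of size about `N`, at distance `O(1/N)` from the cone
`√a + √b = √c + √d`. Cover this neighbourhood, for `N = 2^J`, by plates of angular size `2^(h - J)`.
Orthogonality of the characters of `(ℤ/m)⁴`, `m` large, bounds the number of integer points of a
plate by its volume times the number of integer points of the polar plate. The nonzero points of the
polar plates at height `2^j ≤ 2^(J - 2h)` lie within `O(2^(-j))` of the dual cone, and each lies in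
a controlled number of these plates. Up to a constant, the count for the cone at height `2^J` is
thus a sum of counts for the dual cone at lower heights, and induction on `J` with `h` large costs
only a factor `N^ε`.
-/

open Finset Matrix

lemma sum_norm_sq_sum_addChar {G α : Type*} [AddCommGroup G] [Fintype G] {A : Finset α}
    {φ : α → AddChar G ℂ} (hφ : Set.InjOn φ A) :
    ∑ g, ‖∑ x ∈ A, φ x g‖ ^ 2 = (Fintype.card G * #A : ℝ) := by
  classical
  have expand (g : G) :
      ((‖∑ x ∈ A, φ x g‖ ^ 2 : ℝ) : ℂ) = ∑ x ∈ A, ∑ y ∈ A, (φ x - φ y) g := by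
    rw [Complex.ofReal_pow, ← Complex.mul_conj', map_sum, sum_mul_sum]
    simp only [← AddChar.map_neg_eq_conj, AddChar.sub_apply]
  have orthogonality (x) (hx : x ∈ A) : ∑ y ∈ A, ∑ g, (φ x - φ y) g = Fintype.card G := by
    rw [sum_eq_single_of_mem x hx, sub_self, AddChar.sum_eq_ite, if_pos rfl]
    intro y hy hyx
    rw [AddChar.sum_eq_ite, if_neg (sub_ne_zero.2 fun h ↦ hyx (hφ hy hx h.symm))]
  apply Complex.ofReal_injective
  rw [Complex.ofReal_sum]
  simp only [expand]
  rw [sum_comm, sum_congr rfl fun x hx ↦ sum_comm.trans (orthogonality x hx)]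
  simp [mul_comm]

lemma card_mul_card_le_of_half_le_re_addChar {G α β : Type*} [AddCommGroup G] [Fintype G]
    [DecidableEq G] {A : Finset α} {φ : α → AddChar G ℂ} (hφ : Set.InjOn φ A) {Ξ : Finset β}
    {π : β → G} {m : ℕ} (hm : ∀ g, #{z ∈ Ξ | π z = g} ≤ m)
    (hre : ∀ x ∈ A, ∀ z ∈ Ξ, 1 / 2 ≤ (φ x (π z)).re) :
    (#Ξ * #A : ℝ) ≤ 4 * m * Fintype.card G := by
  obtain rfl | hA := A.eq_empty_or_nonempty
  · simp only [card_empty, Nat.cast_zero, mul_zero]; positivity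
  have lower (z) (hz : z ∈ Ξ) : (#A / 2 : ℝ) ^ 2 ≤ ‖∑ x ∈ A, φ x (π z)‖ ^ 2 := by
    gcongr
    calc (#A / 2 : ℝ) = ∑ x ∈ A, (1 / 2 : ℝ) := by rw [sum_const, nsmul_eq_mul]; ring
      _ ≤ (∑ x ∈ A, φ x (π z)).re := by
        rw [Complex.re_sum]; exact sum_le_sum fun x hx ↦ hre x hx z hz
      _ ≤ _ := Complex.re_le_norm _
  have fibres : ∑ z ∈ Ξ, ‖∑ x ∈ A, φ x (π z)‖ ^ 2 ≤ m * ∑ g, ‖∑ x ∈ A, φ x g‖ ^ 2 := by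
    rw [← sum_fiberwise Ξ π, mul_sum]
    refine sum_le_sum fun g _ ↦ ?_
    rw [sum_congr rfl fun z hz ↦ by rw [(mem_filter.1 hz).2], sum_const, nsmul_eq_mul]
    gcongr
    exact hm g
  rw [sum_norm_sq_sum_addChar hφ] at fibres
  have := (card_nsmul_le_sum Ξ _ _ lower).trans fibres
  rw [nsmul_eq_mul] at this
  have hA' : (0 : ℝ) < #A := by exact_mod_cast hA.card_pos
  nlinarith [le_of_mul_le_mul_right (a := (#A : ℝ)) (b := #Ξ * #A / 4) (c := m * Fintype.card G)
    (by linarith) hA']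

lemma half_le_re_stdAddChar {q : ℕ} [NeZero q] {k : ℤ} (hk : |(k : ℝ)| ≤ q / 6) :
    1 / 2 ≤ (ZMod.stdAddChar (k : ZMod q)).re := by
  have hq : (0 : ℝ) < q := by exact_mod_cast Nat.pos_of_ne_zero (NeZero.ne q)
  have hexp : 2 * Real.pi * Complex.I * k / q = ((2 * Real.pi * (k / q) : ℝ) : ℂ) * Complex.I := by
    push_cast; ring
  rw [ZMod.stdAddChar_coe, hexp, Complex.exp_ofReal_mul_I_re, ← Real.cos_abs,
    ← Real.cos_pi_div_three]
  apply Real.cos_le_cos_of_nonneg_of_le_pi (abs_nonneg _) (by linarith [Real.pi_pos])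
  rw [abs_mul, abs_of_pos Real.two_pi_pos, abs_div, abs_of_pos hq]
  have : |(k : ℝ)| / q ≤ 1 / 6 := by rw [div_le_iff₀ hq]; linarith
  nlinarith [Real.pi_pos]

section IntegerPoints

variable {ι : Type*} {R : Type*}

/-- The coordinatewise image of a point of `ℤᵈ × ℤ` in a ring `R`: the point as a real vector for
`R = ℝ`, its residue class for `R = ZMod q`. -/
def castPoint (R : Type*) [Ring R] : (ι → ℤ) × ℤ →+ (ι → R) × R :=
  ((Int.castAddHom R).compLeft ι).prodMap (Int.castAddHom R)

@[simp] lemma castPoint_fst_apply [Ring R] (X : (ι → ℤ) × ℤ) (i : ι) :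
    (castPoint R X).1 i = X.1 i := rfl

@[simp] lemma castPoint_snd [Ring R] (X : (ι → ℤ) × ℤ) : (castPoint R X).2 = X.2 := rfl

lemma castPoint_zmod_eq_zero_iff {q : ℕ} (X : (ι → ℤ) × ℤ) :
    castPoint (ZMod q) X = 0 ↔ ∃ Y : (ι → ℤ) × ℤ, X = (q : ℤ) • Y := by
  constructor
  · intro h
    have h₁ (i : ι) : (q : ℤ) ∣ X.1 i :=
      (ZMod.intCast_zmod_eq_zero_iff_dvd _ _).1 (congrFun (congrArg Prod.fst h) i)
    have h₂ : (q : ℤ) ∣ X.2 := (ZMod.intCast_zmod_eq_zero_iff_dvd _ _).1 (congrArg Prod.snd h)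
    choose Y₁ hY₁ using h₁
    obtain ⟨Y₂, hY₂⟩ := h₂
    exact ⟨(Y₁, Y₂), Prod.ext (funext hY₁) hY₂⟩
  · rintro ⟨Y, rfl⟩
    rw [map_zsmul]
    ext <;> simp

variable [Fintype ι]

/-- The standard pairing on `Rᵈ × R`. -/
def pairing [CommRing R] : LinearMap.BilinForm R ((ι → R) × R) :=
  LinearMap.mk₂ R (fun x y ↦ x.1 ⬝ᵥ y.1 + x.2 * y.2)
    (fun x x' y ↦ by simp only [Prod.fst_add, Prod.snd_add, add_dotProduct]; ring)
    (fun c x y ↦ by simp only [Prod.smul_fst, Prod.smul_snd, smul_dotProduct, smul_eq_mul]; ring)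
    (fun x y y' ↦ by simp only [Prod.fst_add, Prod.snd_add, dotProduct_add]; ring)
    (fun c x y ↦ by simp only [Prod.smul_fst, Prod.smul_snd, dotProduct_smul, smul_eq_mul]; ring)

lemma pairing_apply [CommRing R] (x y : (ι → R) × R) :
    pairing x y = x.1 ⬝ᵥ y.1 + x.2 * y.2 := rfl

lemma pairing_castPoint [CommRing R] (X Y : (ι → ℤ) × ℤ) :
    pairing (castPoint R X) (castPoint R Y) = (pairing X Y : ℤ) := by
  simp [pairing_apply, dotProduct]

lemma pairing_injective [CommRing R] :
    Function.Injective (pairing : (ι → R) × R → Module.Dual R ((ι → R) × R)) := by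
  classical
  intro x y h
  refine Prod.ext (funext fun i ↦ ?_) ?_
  · simpa [pairing_apply] using LinearMap.congr_fun h (Pi.single i 1, 0)
  · simpa [pairing_apply] using LinearMap.congr_fun h (0, 1)

/-- The character `ζ ↦ e(x · ζ / q)` of `(ℤ/q)ᵈ × ℤ/q`. -/
noncomputable def pairingChar {q : ℕ} [NeZero q] (x : (ι → ZMod q) × ZMod q) :
    AddChar ((ι → ZMod q) × ZMod q) ℂ :=
  ZMod.stdAddChar.compAddMonoidHom (pairing x).toAddMonoidHom

lemma pairingChar_injective {q : ℕ} [NeZero q] :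
    Function.Injective
      (pairingChar : (ι → ZMod q) × ZMod q → AddChar ((ι → ZMod q) × ZMod q) ℂ) :=
  fun _ _ h ↦ pairing_injective <| LinearMap.ext fun ζ ↦
    ZMod.injective_stdAddChar (DFunLike.congr_fun h ζ)

lemma norm_castPoint (X : (ι → ℤ) × ℤ) : ‖castPoint ℝ X‖ = ‖X‖ := by
  have h (i : ι) : ‖(castPoint ℝ X).1 i‖₊ = ‖X.1 i‖₊ := NNReal.eq (Int.norm_cast_real _)
  rw [Prod.norm_def, Prod.norm_def, Pi.norm_def, Pi.norm_def, castPoint_snd, Int.norm_cast_real]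
  simp only [h]

lemma finite_setOf_norm_castPoint_le (r : ℝ) :
    {X : (ι → ℤ) × ℤ | ‖castPoint ℝ X‖ ≤ r}.Finite := by
  simp only [norm_castPoint]
  have := (isCompact_closedBall (0 : (ι → ℤ) × ℤ) r).finite_of_discrete
  simpa only [Metric.closedBall, dist_zero_right] using this

lemma eq_zero_of_norm_lt_one {X : (ι → ℤ) × ℤ} (hX : ‖X‖ < 1) : X = 0 := by
  have int_eq_zero {k : ℤ} (hk : ‖k‖ < 1) : k = 0 := by
    rw [Int.norm_eq_abs] at hk
    exact Int.abs_lt_one_iff.1 (by exact_mod_cast hk)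
  exact Prod.ext
    (funext fun i ↦ int_eq_zero <| ((norm_le_pi_norm X.1 i).trans (norm_fst_le X)).trans_lt hX)
    (int_eq_zero <| (norm_snd_le X).trans_lt hX)

lemma castPoint_zmod_injOn {q : ℕ} {A : Set ((ι → ℤ) × ℤ)} {r : ℝ} (hr : 2 * r < q)
    (hA : ∀ X ∈ A, ‖castPoint ℝ X‖ ≤ r) : Set.InjOn (castPoint (ZMod q)) A := by
  intro X hX Y hY h
  obtain ⟨Z, hZ⟩ := (castPoint_zmod_eq_zero_iff (X - Y)).1
    (by rw [map_sub (castPoint (ZMod q)), h, sub_self])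
  have hnorm : q * ‖Z‖ < q * 1 := by
    calc q * ‖Z‖ = ‖castPoint ℝ (X - Y)‖ := by
          rw [norm_castPoint, hZ, norm_smul]; simp
      _ ≤ ‖castPoint ℝ X‖ + ‖castPoint ℝ Y‖ := by rw [map_sub]; exact norm_sub_le _ _
      _ < q * 1 := by linarith [hA X hX, hA Y hY]
  have hZ₀ : ‖Z‖ < 1 := lt_of_mul_lt_mul_left hnorm q.cast_nonneg
  rwa [eq_zero_of_norm_lt_one hZ₀, smul_zero, sub_eq_zero] at hZ

end IntegerPoints

section Plates

variable {ι : Type*} [Fintype ι]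

lemma abs_dotProduct_le (u v : ι → ℝ) : |u ⬝ᵥ v| ≤ Fintype.card ι * (‖u‖ * ‖v‖) := by
  calc |u ⬝ᵥ v| ≤ ∑ i, |u i * v i| := abs_sum_le_sum_abs _ _
    _ ≤ ∑ _i : ι, ‖u‖ * ‖v‖ := by
      gcongr with i
      rw [abs_mul]
      exact mul_le_mul (norm_le_pi_norm u i) (norm_le_pi_norm v i) (abs_nonneg _) (norm_nonneg _)
    _ = _ := by rw [sum_const, nsmul_eq_mul, card_univ]

/-- The plate of length `N` in the direction `(p, 1)`, of width `r`, and of thickness `δ` in the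
direction normal to `(q, 1)`. For `p · q = -1` the direction `(p, 1)` is tangent to the plate, and
the polar body is comparable to the plate of the same kind with `p` and `q` exchanged and with
dimensions `1 / δ`, `1 / r`, `1 / N`. -/
def plate (p q : ι → ℝ) (N r δ : ℝ) : Set ((ι → ℝ) × ℝ) :=
  {x | |x.2| ≤ N ∧ ‖x.1 - x.2 • p‖ ≤ r ∧ |pairing (q, 1) x| ≤ δ}

variable {p q : ι → ℝ} {N r δ N' r' δ' L : ℝ} {x y : (ι → ℝ) × ℝ}

lemma plate_mono (hN : N ≤ N') (hr : r ≤ r') (hδ : δ ≤ δ') :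
    plate p q N r δ ⊆ plate p q N' r' δ' :=
  fun _ hx ↦ ⟨hx.1.trans hN, hx.2.1.trans hr, hx.2.2.trans hδ⟩

lemma smul_mem_plate (hx : x ∈ plate p q N r δ) (c : ℝ) :
    c • x ∈ plate p q (|c| * N) (|c| * r) (|c| * δ) := by
  obtain ⟨h₁, h₂, h₃⟩ := hx
  refine ⟨?_, ?_, ?_⟩
  · rw [Prod.smul_snd, smul_eq_mul, abs_mul]; gcongr
  · rw [Prod.smul_fst, Prod.smul_snd, smul_assoc, ← smul_sub, norm_smul, Real.norm_eq_abs]; gcongr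
  · rw [map_smul, smul_eq_mul, abs_mul]; gcongr

lemma neg_mem_plate (hx : x ∈ plate p q N r δ) : -x ∈ plate p q N r δ := by
  simpa using smul_mem_plate hx (-1)

lemma sub_mem_plate (hx : x ∈ plate p q N r δ) (hy : y ∈ plate p q N' r' δ') :
    x - y ∈ plate p q (N + N') (r + r') (δ + δ') := by
  refine ⟨?_, ?_, ?_⟩
  · exact (abs_sub _ _).trans (add_le_add hx.1 hy.1)
  · rw [Prod.fst_sub, Prod.snd_sub, sub_smul, sub_sub_sub_comm]
    exact (norm_sub_le _ _).trans (add_le_add hx.2.1 hy.2.1)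
  · rw [map_sub]
    exact (abs_sub _ _).trans (add_le_add hx.2.2 hy.2.2)

lemma norm_le_of_mem_plate (hx : x ∈ plate p q N r δ) : ‖x‖ ≤ r + N * (1 + ‖p‖) := by
  have hN : 0 ≤ N := (abs_nonneg _).trans hx.1
  have hr : 0 ≤ r := (norm_nonneg _).trans hx.2.1
  refine max_le ?_ ?_
  · calc ‖x.1‖ = ‖(x.1 - x.2 • p) + x.2 • p‖ := by rw [sub_add_cancel]
      _ ≤ ‖x.1 - x.2 • p‖ + |x.2| * ‖p‖ := (norm_add_le _ _).trans_eq (by rw [norm_smul]; rfl)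
      _ ≤ r + N * ‖p‖ := by gcongr; exacts [hx.2.1, hx.1]
      _ ≤ r + N * (1 + ‖p‖) := by gcongr; linarith
  · calc ‖x.2‖ ≤ N := hx.1
      _ ≤ r + N * (1 + ‖p‖) := by nlinarith [mul_nonneg hN (norm_nonneg p)]

lemma pairing_eq_of_dotProduct_eq_neg_one (hpq : p ⬝ᵥ q = -1) (x y : (ι → ℝ) × ℝ) :
    pairing x y =
      (x.1 - x.2 • p) ⬝ᵥ (y.1 - y.2 • q) + x.2 * pairing (p, 1) y + y.2 * pairing (q, 1) x := by
  simp only [pairing_apply, sub_dotProduct, dotProduct_sub, smul_dotProduct, dotProduct_smul,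
    smul_eq_mul, dotProduct_comm x.1 q, hpq]
  ring

lemma abs_pairing_le_of_mem_plate (hpq : p ⬝ᵥ q = -1) (hx : x ∈ plate p q N r δ)
    (hy : y ∈ plate q p N' r' δ') :
    |pairing x y| ≤ Fintype.card ι * (r * r') + N * δ' + N' * δ := by
  have hN : 0 ≤ N := (abs_nonneg _).trans hx.1
  have hN' : 0 ≤ N' := (abs_nonneg _).trans hy.1
  have hr : 0 ≤ r := (norm_nonneg _).trans hx.2.1
  rw [pairing_eq_of_dotProduct_eq_neg_one hpq]
  refine (abs_add_three _ _ _).trans (add_le_add_three ?_ ?_ ?_)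
  · refine (abs_dotProduct_le _ _).trans ?_
    gcongr
    exacts [hx.2.1, hy.2.1]
  · rw [abs_mul]; exact mul_le_mul hx.1 hy.2.2 (abs_nonneg _) hN
  · rw [abs_mul]; exact mul_le_mul hy.1 hx.2.2 (abs_nonneg _) hN'

lemma finite_castPoint_mem_plate (p q : ι → ℝ) (N r δ : ℝ) :
    {X : (ι → ℤ) × ℤ | castPoint ℝ X ∈ plate p q N r δ}.Finite :=
  (finite_setOf_norm_castPoint_le _).subset fun _ hX ↦ norm_le_of_mem_plate hX

/-- The integer points of a plate. -/
noncomputable def platePoints (p q : ι → ℝ) (N r δ : ℝ) : Finset ((ι → ℤ) × ℤ) :=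
  (finite_castPoint_mem_plate p q N r δ).toFinset

@[simp] lemma mem_platePoints {X : (ι → ℤ) × ℤ} :
    X ∈ platePoints p q N r δ ↔ castPoint ℝ X ∈ plate p q N r δ := by
  simp [platePoints]

end Plates

section Transference

variable {ι : Type*} [Fintype ι] {p q : ι → ℝ} {N r δ L : ℝ}

lemma card_filter_castPoint_zmod_eq_le {m : ℕ} [NeZero m] {Ξ : Finset ((ι → ℤ) × ℤ)}
    (hΞ : ∀ Z ∈ Ξ, castPoint ℝ Z ∈ plate p q (m * N / 2) (m * r / 2) (m * δ / 2))
    (g : (ι → ZMod m) × ZMod m) :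
    #{Z ∈ Ξ | castPoint (ZMod m) Z = g} ≤ #(platePoints p q N r δ) := by
  classical
  have hm : (0 : ℝ) < m := by exact_mod_cast Nat.pos_of_ne_zero (NeZero.ne m)
  obtain hempty | ⟨Z₀, hZ₀⟩ := (Ξ.filter (castPoint (ZMod m) · = g)).eq_empty_or_nonempty
  · simp [hempty]
  refine (card_le_card (t := image (fun Y ↦ Z₀ + (m : ℤ) • Y) _) fun Z hZ ↦ ?_).trans
    card_image_le
  rw [mem_filter] at hZ hZ₀
  obtain ⟨Y, hY⟩ := (castPoint_zmod_eq_zero_iff (Z - Z₀)).1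
    (by rw [map_sub (castPoint (ZMod m)), hZ.2, hZ₀.2, sub_self])
  refine mem_image.2 ⟨Y, mem_platePoints.2 ?_, by rw [← hY, add_sub_cancel]⟩
  have hYZ : castPoint ℝ Y = (m : ℝ)⁻¹ • (castPoint ℝ Z - castPoint ℝ Z₀) := by
    rw [← map_sub, hY, map_zsmul, ← Int.cast_smul_eq_zsmul ℝ, Int.cast_natCast,
      inv_smul_smul₀ hm.ne']
  rw [hYZ]
  refine plate_mono ?_ ?_ ?_ (smul_mem_plate (sub_mem_plate (hΞ Z hZ.1) (hΞ Z₀ hZ₀.1)) _) <;>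
  · rw [abs_of_pos (inv_pos.2 hm)]
    field_simp
    norm_num

-- `m` large makes reduction mod `m` injective on the plate: its points give distinct characters.
lemma card_mul_card_platePoints_le (hpq : p ⬝ᵥ q = -1) (hN : 0 < N) (hr : 0 < r) (hδ : 0 < δ)
    {m : ℕ} [NeZero m] (hm : 2 * (r + N * (1 + ‖p‖)) < m) {κ : ℝ}
    (hκ : 6 * (Fintype.card ι + 2) * κ ≤ 1) {Ξ : Finset ((ι → ℤ) × ℤ)}
    (hΞ : ∀ Z ∈ Ξ, castPoint ℝ Z ∈ plate q p (κ * m / δ) (κ * m / r) (κ * m / N)) :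
    (#Ξ * #(platePoints p q N r δ) : ℝ) ≤
      4 * #(platePoints q p (1 / δ) (1 / r) (1 / N)) * m ^ (Fintype.card ι + 1) := by
  classical
  have hm₀ : (0 : ℝ) < m := by exact_mod_cast Nat.pos_of_ne_zero (NeZero.ne m)
  have hκ₂ : 2 * κ ≤ 1 := by
    by_contra! h
    nlinarith [(Fintype.card ι).cast_nonneg (α := ℝ)]
  have card_eq : (Fintype.card ((ι → ZMod m) × ZMod m) : ℝ) = m ^ (Fintype.card ι + 1) := by
    rw [Fintype.card_prod, Fintype.card_fun, ZMod.card, pow_succ]; norm_cast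
  rw [← card_eq]
  refine card_mul_card_le_of_half_le_re_addChar (φ := fun X ↦ pairingChar (castPoint (ZMod m) X))
    (π := castPoint (ZMod m)) ?_ ?_ ?_
  · exact pairingChar_injective.injOn.comp (castPoint_zmod_injOn hm fun X hX ↦
      norm_le_of_mem_plate (mem_platePoints.1 hX)) (Set.mapsTo_univ _ _)
  · intro g
    refine card_filter_castPoint_zmod_eq_le (fun Z hZ ↦ plate_mono ?_ ?_ ?_ (hΞ Z hZ)) g <;>
    · field_simp
      linarith
  · intro X hX Z hZ
    have hXZ : pairingChar (castPoint (ZMod m) X) (castPoint (ZMod m) Z) =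
        ZMod.stdAddChar ((pairing X Z : ℤ) : ZMod m) := by
      rw [← pairing_castPoint]; rfl
    rw [hXZ]
    apply half_le_re_stdAddChar
    rw [← pairing_castPoint]
    refine (abs_pairing_le_of_mem_plate hpq (mem_platePoints.1 hX) (hΞ Z hZ)).trans ?_
    field_simp
    linarith

lemma exists_one_le_mul_abs (hpq : p ⬝ᵥ q = -1) (hq : ‖q‖ ≤ L) :
    ∃ i, 1 ≤ Fintype.card ι * L * |p i| := by
  have hι : (univ : Finset ι).Nonempty := by
    by_contra h
    simp [dotProduct, not_nonempty_iff_eq_empty.1 h] at hpq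
  have hsum : 1 ≤ L * ∑ i, |p i| := calc
    1 = |p ⬝ᵥ q| := by rw [hpq]; norm_num
    _ ≤ ∑ i, |p i * q i| := abs_sum_le_sum_abs _ _
    _ ≤ ∑ i, L * |p i| := by
      gcongr with i
      rw [abs_mul, mul_comm]
      gcongr
      exact (norm_le_pi_norm q i).trans hq
    _ = L * ∑ i, |p i| := (mul_sum _ _ _).symm
  obtain ⟨i, -, hi⟩ := exists_le_of_sum_le (f := fun _ ↦ (1 : ℝ))
    (g := fun i ↦ Fintype.card ι * L * |p i|) hι (by
      rw [sum_const, nsmul_one, card_univ, ← mul_sum, mul_assoc]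
      exact le_mul_of_one_le_right (Nat.cast_nonneg _) hsum)
  exact ⟨i, hi⟩

section SlabPoints

variable [DecidableEq ι] {i₀ : ι} {k : (ι → ℕ) × ℕ} {U V W : ℝ}

/-- The `p`-component of the rounding errors `⌊k.2 * q i⌋ + k.1 i - k.2 * q i`, `i ≠ i₀`, which
the `i₀`-th coordinate of `slabPoint p q i₀ k` compensates. -/
noncomputable def slabError (p q : ι → ℝ) (i₀ : ι) (k : (ι → ℕ) × ℕ) : ℝ :=
  ∑ i ∈ univ.erase i₀, p i * (⌊k.2 * q i⌋ + k.1 i - k.2 * q i)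

/-- Lattice points filling a plate with parameters `q`, `p`: the point with index `k` is close to
`k.2 • (q, 1)`, and its `i₀`-th coordinate makes its pairing with `(p, 1)` comparable to
`k.1 i₀`. -/
noncomputable def slabPoint (p q : ι → ℝ) (i₀ : ι) (k : (ι → ℕ) × ℕ) : (ι → ℤ) × ℤ :=
  (Function.update (fun i ↦ ⌊k.2 * q i⌋ + k.1 i) i₀
    (⌊k.2 * q i₀ - slabError p q i₀ k / p i₀⌋ + k.1 i₀), k.2)

lemma slabPoint_fst_self : ((slabPoint p q i₀ k).1 i₀ : ℝ) =
    ⌊k.2 * q i₀ - slabError p q i₀ k / p i₀⌋ + k.1 i₀ := by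
  simp [slabPoint]

lemma slabPoint_fst_of_ne {i : ι} (hi : i ≠ i₀) :
    ((slabPoint p q i₀ k).1 i : ℝ) = ⌊k.2 * q i⌋ + k.1 i := by
  simp [slabPoint, Function.update_of_ne hi]

lemma slabPoint_injective (p q : ι → ℝ) (i₀ : ι) : Function.Injective (slabPoint p q i₀) := by
  rintro ⟨k, w⟩ ⟨k', w'⟩ h
  obtain rfl : w = w' := Nat.cast_injective (congrArg Prod.snd h : (w : ℤ) = w')
  have coord (i : ι) : ((slabPoint p q i₀ (k, w)).1 i : ℝ) = (slabPoint p q i₀ (k', w)).1 i := by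
    rw [h]
  have off (i : ι) (hi : i ≠ i₀) : k i = k' i := by
    simpa [slabPoint_fst_of_ne hi] using coord i
  have error_eq : slabError p q i₀ (k, w) = slabError p q i₀ (k', w) :=
    sum_congr rfl fun i hi ↦ by simp only [off i (ne_of_mem_erase hi)]
  have on : k i₀ = k' i₀ := by simpa [slabPoint_fst_self, error_eq] using coord i₀
  exact Prod.ext (funext fun i ↦ if hi : i = i₀ then hi ▸ on else off i hi) rfl

lemma abs_floor_add_sub_le {x V : ℝ} {k : ℕ} (hV : 1 ≤ V) (hk : k < ⌊V⌋₊) :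
    |⌊x⌋ + k - x| ≤ V := by
  have hkV : (k : ℝ) ≤ V := (Nat.cast_le.2 hk.le).trans (Nat.floor_le (by linarith))
  have := Int.floor_le x
  have := Int.sub_one_lt_floor x
  rw [abs_le]
  constructor <;> linarith [k.cast_nonneg (α := ℝ)]

lemma abs_slabError_le (hp : ‖p‖ ≤ L) (hV : 1 ≤ V) (hk : ∀ i ≠ i₀, k.1 i < ⌊V⌋₊) :
    |slabError p q i₀ k| ≤ Fintype.card ι * L * V := by
  have hL : 0 ≤ L := (norm_nonneg p).trans hp
  calc |slabError p q i₀ k|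
    _ ≤ ∑ i ∈ univ.erase i₀, |p i * (⌊k.2 * q i⌋ + k.1 i - k.2 * q i)| :=
      abs_sum_le_sum_abs _ _
    _ ≤ ∑ _i ∈ univ.erase i₀, L * V := by
      refine sum_le_sum fun i hi ↦ ?_
      rw [abs_mul]
      exact mul_le_mul ((norm_le_pi_norm p i).trans hp)
        (abs_floor_add_sub_le hV (hk i (ne_of_mem_erase hi))) (abs_nonneg _) hL
    _ ≤ Fintype.card ι * (L * V) := by
      rw [sum_const, nsmul_eq_mul]
      gcongr
      exact card_le_univ _
    _ = _ := (mul_assoc _ _ _).symm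

lemma pairing_slabPoint (hpq : p ⬝ᵥ q = -1) (hi₀ : p i₀ ≠ 0) :
    pairing (p, 1) (castPoint ℝ (slabPoint p q i₀ k)) =
      p i₀ * ((slabPoint p q i₀ k).1 i₀ - (k.2 * q i₀ - slabError p q i₀ k / p i₀)) := by
  calc pairing (p, 1) (castPoint ℝ (slabPoint p q i₀ k))
    _ = p ⬝ᵥ ((castPoint ℝ (slabPoint p q i₀ k)).1 - (k.2 : ℝ) • q) := by
      rw [pairing_apply, dotProduct_sub, dotProduct_smul, hpq]
      simp [slabPoint]
    _ = p i₀ * ((slabPoint p q i₀ k).1 i₀ - k.2 * q i₀) + slabError p q i₀ k := by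
      rw [dotProduct, ← add_sum_erase _ _ (mem_univ i₀), slabError]
      congr 1
      refine sum_congr rfl fun i hi ↦ ?_
      simp [slabPoint_fst_of_ne (ne_of_mem_erase hi)]
    _ = _ := by field_simp; ring

lemma slabPoint_mem_plate (hpq : p ⬝ᵥ q = -1) (hp : ‖p‖ ≤ L)
    (hi₀ : 1 ≤ Fintype.card ι * L * |p i₀|) (hW : 1 ≤ W) (hWV : W ≤ V)
    (hk₂ : k.2 < ⌊U⌋₊) (hk₀ : k.1 i₀ < ⌊W⌋₊) (hk : ∀ i ≠ i₀, k.1 i < ⌊V⌋₊) :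
    castPoint ℝ (slabPoint p q i₀ k) ∈
      plate q p U ((1 + (Fintype.card ι * L) ^ 2) * V) (L * W) := by
  have hL : 0 ≤ L := (norm_nonneg p).trans hp
  have hV : 1 ≤ V := hW.trans hWV
  have hpi₀ : p i₀ ≠ 0 := fun h ↦ by rw [h, abs_zero, mul_zero] at hi₀; linarith
  have on : |(slabPoint p q i₀ k).1 i₀ - (k.2 * q i₀ - slabError p q i₀ k / p i₀)| ≤ W := by
    rw [slabPoint_fst_self]
    exact abs_floor_add_sub_le hW hk₀
  refine ⟨?_, (pi_norm_le_iff_of_nonneg (by positivity)).2 fun i ↦ ?_, ?_⟩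
  · calc |(castPoint ℝ (slabPoint p q i₀ k)).2| = k.2 := by simp [slabPoint]
      _ ≤ U := (Nat.lt_of_lt_floor hk₂).le
  · change |((slabPoint p q i₀ k).1 i : ℝ) - k.2 * q i| ≤ _
    obtain rfl | hi := eq_or_ne i i₀
    · have abs_div_le : |slabError p q i k / p i| ≤ Fintype.card ι * L * |slabError p q i k| := by
        rw [abs_div, div_le_iff₀ (abs_pos.2 hpi₀)]
        nlinarith [abs_nonneg (slabError p q i k)]
      calc |((slabPoint p q i k).1 i : ℝ) - k.2 * q i|
        _ = |(slabPoint p q i k).1 i - (k.2 * q i - slabError p q i k / p i) -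
              slabError p q i k / p i| := by ring_nf
        _ ≤ W + Fintype.card ι * L * |slabError p q i k| :=
          (abs_sub _ _).trans (add_le_add on abs_div_le)
        _ ≤ V + Fintype.card ι * L * (Fintype.card ι * L * V) := by
          gcongr
          exact abs_slabError_le hp hV hk
        _ = _ := by ring
    · rw [slabPoint_fst_of_ne hi]
      refine (abs_floor_add_sub_le hV (hk i hi)).trans ?_
      exact le_mul_of_one_le_left (by linarith) (by linarith [sq_nonneg (Fintype.card ι * L)])
  · rw [pairing_slabPoint hpq hpi₀, abs_mul]
    exact mul_le_mul ((norm_le_pi_norm p i₀).trans hp) on (abs_nonneg _) hL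

end SlabPoints

lemma half_le_natFloor {x : ℝ} (hx : 1 ≤ x) : x / 2 ≤ ⌊x⌋₊ := by
  have : (1 : ℝ) ≤ ⌊x⌋₊ := by exact_mod_cast Nat.floor_pos.2 hx
  linarith [Nat.lt_floor_add_one x]

lemma exists_finset_subset_plate (hpq : p ⬝ᵥ q = -1) (hp : ‖p‖ ≤ L) (hq : ‖q‖ ≤ L)
    {U V W B : ℝ} (hU : 1 ≤ U) (hW : 1 ≤ W) (hWV : W ≤ V)
    (hB : 1 + (Fintype.card ι * L) ^ 2 + L ≤ B) :
    ∃ Ξ : Finset ((ι → ℤ) × ℤ), (∀ Z ∈ Ξ, castPoint ℝ Z ∈ plate q p (B * U) (B * V) (B * W)) ∧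
      W / 2 * (V / 2) ^ (Fintype.card ι - 1) * (U / 2) ≤ #Ξ := by
  classical
  have hL : 0 ≤ L := (norm_nonneg p).trans hp
  have hV : 1 ≤ V := hW.trans hWV
  obtain ⟨i₀, hi₀⟩ := exists_one_le_mul_abs hpq hq
  let side : ι → ℕ := Function.update (fun _ ↦ ⌊V⌋₊) i₀ ⌊W⌋₊
  refine ⟨(Fintype.piFinset (fun i ↦ range (side i)) ×ˢ range ⌊U⌋₊).image (slabPoint p q i₀),
    ?_, ?_⟩
  · simp only [mem_image, mem_product, Fintype.mem_piFinset, mem_range]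
    rintro _ ⟨k, ⟨hk, hk₂⟩, rfl⟩
    refine plate_mono ?_ ?_ ?_ (slabPoint_mem_plate hpq hp hi₀ hW hWV hk₂ ?_ fun i hi ↦ ?_)
    · exact le_mul_of_one_le_left (by linarith) (by linarith [sq_nonneg (Fintype.card ι * L)])
    · gcongr; linarith
    · gcongr; linarith [sq_nonneg (Fintype.card ι * L)]
    · simpa [side] using hk i₀
    · simpa [side, Function.update_of_ne hi] using hk i
  · rw [card_image_of_injective _ (slabPoint_injective p q i₀), card_product, card_range,
      Fintype.card_piFinset]
    simp only [card_range, side, prod_update_of_mem (mem_univ i₀), prod_const, card_sdiff,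
      inter_univ, card_singleton, card_univ, Nat.cast_mul, Nat.cast_pow]
    have := half_le_natFloor hU
    have := half_le_natFloor hW
    have := half_le_natFloor hV
    gcongr

lemma card_platePoints_le {e : ℕ} (hι : Fintype.card ι = e + 1) (L : ℝ) :
    ∃ C > 0, ∀ ⦃p q : ι → ℝ⦄, p ⬝ᵥ q = -1 → ‖p‖ ≤ L → ‖q‖ ≤ L →
      ∀ ⦃N r δ : ℝ⦄, 0 < r → 0 < δ → r ≤ N →
        (#(platePoints p q N r δ) : ℝ) ≤
          C * (N * r ^ e * δ) * #(platePoints q p (1 / δ) (1 / r) (1 / N)) := by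
  set B : ℝ := 1 + (Fintype.card ι * L) ^ 2 + |L|
  have hB₀ : 0 < B := by positivity
  obtain ⟨c, hc⟩ : ∃ c, c = (6 * (Fintype.card ι + 2) * B)⁻¹ := ⟨_, rfl⟩
  have hc₀ : 0 < c := by rw [hc]; positivity
  refine ⟨4 * (2 / c) ^ (e + 2), by positivity, fun p q hpq hp hq N r δ hr hδ hrN ↦ ?_⟩
  have hN : 0 < N := hr.trans_le hrN
  obtain ⟨m, hm⟩ := exists_nat_gt (max (2 * (r + N * (1 + ‖p‖))) (max (δ / c) (N / c)))
  obtain ⟨hm, hmδ, hmN⟩ := by simpa only [max_lt_iff] using hm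
  have hm₀ : (0 : ℝ) < m := lt_trans (by positivity) hm
  have : NeZero m := ⟨by exact_mod_cast hm₀.ne'⟩
  obtain ⟨Ξ, hΞ, hcard⟩ := exists_finset_subset_plate hpq hp hq (U := c * m / δ) (V := c * m / r)
    (W := c * m / N) (B := B) ((one_le_div₀ hδ).2 ((div_le_iff₀' hc₀).1 hmδ.le))
    ((one_le_div₀ hN).2 ((div_le_iff₀' hc₀).1 hmN.le)) (by gcongr)
    (by linarith [le_abs_self L])
  have main := card_mul_card_platePoints_le (κ := B * c) hpq hN hr hδ hm
    (le_of_eq (by rw [hc]; field_simp)) (by simpa only [mul_div_assoc, mul_assoc] using hΞ)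
  rw [hι] at main hcard
  calc (#(platePoints p q N r δ) : ℝ)
    _ = (2 / c) ^ (e + 2) * (N * r ^ e * δ) / m ^ (e + 2) *
        ((c * m / N / 2 * (c * m / r / 2) ^ e * (c * m / δ / 2)) *
          #(platePoints p q N r δ)) := by
      simp only [div_pow, mul_pow]; field_simp; ring
    _ ≤ (2 / c) ^ (e + 2) * (N * r ^ e * δ) / m ^ (e + 2) *
        (4 * #(platePoints q p (1 / δ) (1 / r) (1 / N)) * m ^ (e + 2)) := by
      refine mul_le_mul_of_nonneg_left ?_ (by positivity)
      exact (mul_le_mul_of_nonneg_right hcard (Nat.cast_nonneg _)).trans main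
    _ = _ := by field_simp

end Transference

section Cells

/-- The index of the square of the grid of mesh `κ` that contains `θ`. -/
noncomputable def cell (κ : ℝ) (θ : ℝ × ℝ) : ℤ × ℤ := (⌊θ.1 / κ⌋, ⌊θ.2 / κ⌋)

variable {κ : ℝ}

lemma norm_sub_le_of_cell_eq (hκ : 0 < κ) {θ θ' : ℝ × ℝ} (h : cell κ θ = cell κ θ') :
    ‖θ - θ'‖ ≤ κ := by
  have coord {x y : ℝ} (hxy : ⌊x / κ⌋ = ⌊y / κ⌋) : |x - y| ≤ κ := by
    have := Int.abs_sub_lt_one_of_floor_eq_floor hxy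
    rw [← sub_div, abs_div, abs_of_pos hκ, div_lt_one hκ] at this
    exact this.le
  exact max_le (coord (congrArg Prod.fst h)) (coord (congrArg Prod.snd h))

lemma floor_mem_Icc_of_abs_sub_le {x y D : ℝ} (h : |x - y| ≤ D) :
    ⌊x⌋ ∈ Icc (⌊y⌋ - ⌊D + 1⌋) (⌊y⌋ + ⌊D + 1⌋) := by
  obtain ⟨h₁, h₂⟩ := abs_le.1 h
  have hx := Int.floor_le x
  have hx' := Int.lt_floor_add_one x
  have hy := Int.floor_le y
  have hy' := Int.lt_floor_add_one y
  have upper : ⌊x⌋ - ⌊y⌋ ≤ ⌊D + 1⌋ := Int.le_floor.2 (by push_cast; linarith)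
  have lower : ⌊y⌋ - ⌊x⌋ ≤ ⌊D + 1⌋ := Int.le_floor.2 (by push_cast; linarith)
  exact mem_Icc.2 ⟨by linarith, by linarith⟩

lemma card_le_of_injOn_cell (hκ : 0 < κ) {T : Finset (ℝ × ℝ)} (hT : Set.InjOn (cell κ) T) {D : ℝ}
    (hD : ∀ θ ∈ T, ∀ θ' ∈ T, ‖θ - θ'‖ ≤ D) : (#T : ℝ) ≤ (2 * D / κ + 3) ^ 2 := by
  obtain rfl | ⟨θ₀, hθ₀⟩ := T.eq_empty_or_nonempty
  · simp only [card_empty, Nat.cast_zero]; positivity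
  have hD₀ : 0 ≤ D := (norm_nonneg _).trans (hD θ₀ hθ₀ θ₀ hθ₀)
  obtain ⟨n, hn⟩ : ∃ n : ℤ, n = ⌊D / κ + 1⌋ := ⟨_, rfl⟩
  have hn₀ : 0 ≤ n := hn ▸ Int.floor_nonneg.2 (by positivity)
  have coord {x y : ℝ} (hxy : |x - y| ≤ D) : ⌊x / κ⌋ ∈ Icc (⌊y / κ⌋ - n) (⌊y / κ⌋ + n) := by
    rw [hn]
    apply floor_mem_Icc_of_abs_sub_le
    rw [← sub_div, abs_div, abs_of_pos hκ]
    gcongr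
  have hcard : #T ≤ (2 * n + 1).toNat ^ 2 := calc
    #T = #(T.image (cell κ)) := (card_image_of_injOn hT).symm
    _ ≤ #(Icc (⌊θ₀.1 / κ⌋ - n) (⌊θ₀.1 / κ⌋ + n) ×ˢ Icc (⌊θ₀.2 / κ⌋ - n) (⌊θ₀.2 / κ⌋ + n)) := by
      refine card_le_card (image_subset_iff.2 fun θ hθ ↦ mem_product.2 ⟨?_, ?_⟩)
      · exact coord ((norm_fst_le (θ - θ₀)).trans (hD θ hθ θ₀ hθ₀))
      · exact coord ((norm_snd_le (θ - θ₀)).trans (hD θ hθ θ₀ hθ₀))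
    _ = (2 * n + 1).toNat ^ 2 := by
      rw [card_product, Int.card_Icc, Int.card_Icc, sq]
      congr 2 <;> ring
  calc (#T : ℝ) ≤ ((2 * n + 1).toNat : ℝ) ^ 2 := by exact_mod_cast hcard
    _ = (2 * n + 1 : ℝ) ^ 2 := by
      congr 1
      exact_mod_cast Int.toNat_of_nonneg (by linarith : 0 ≤ 2 * n + 1)
    _ ≤ (2 * D / κ + 3) ^ 2 := by
      have : (0 : ℝ) ≤ n := by exact_mod_cast hn₀
      have hn' : n ≤ D / κ + 1 := hn ▸ Int.floor_le _
      refine pow_le_pow_left₀ (by positivity) ?_ 2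
      rw [mul_div_assoc]
      linarith

lemma exists_injOn_cell_image_eq (κ : ℝ) (T : Finset (ℝ × ℝ)) :
    ∃ T' ⊆ T, Set.InjOn (cell κ) T' ∧ ∀ θ ∈ T, ∃ θ' ∈ T', cell κ θ' = cell κ θ := by
  classical
  obtain ⟨T', hT', hinj, himage⟩ := exists_subset_injOn_image_eq_of_surjOn T
    (T.image (cell κ)) (by simpa using Set.surjOn_image _ _)
  refine ⟨T', by simpa using hT', hinj, fun θ hθ ↦ ?_⟩
  have := mem_image_of_mem (cell κ) hθ
  rw [← himage] at this
  exact mem_image.1 this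

end Cells

section DualPairs

variable {ι : Type*} [Fintype ι] {K : Set (ℝ × ℝ)} {L : ℝ} {p q : ℝ × ℝ → ι → ℝ}

/-- Two families `p`, `q` parametrising dual cones, spanned by the `(p θ, 1)` and by the `(q θ, 1)`:
`(q θ, 1)` is normal to the first cone along `(p θ, 1)` and conversely, and both parametrisations
are bi-Lipschitz, uniformly in terms of `L`. -/
structure IsDualPair (K : Set (ℝ × ℝ)) (L : ℝ) (p q : ℝ × ℝ → ι → ℝ) : Prop where
  one_le : 1 ≤ L
  dotProduct_eq ⦃θ⦄ : θ ∈ K → p θ ⬝ᵥ q θ = -1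
  norm_left_le ⦃θ⦄ : θ ∈ K → ‖p θ‖ ≤ L
  norm_right_le ⦃θ⦄ : θ ∈ K → ‖q θ‖ ≤ L
  norm_left_sub_le ⦃θ⦄ : θ ∈ K → ∀ ⦃θ'⦄, θ' ∈ K → ‖p θ - p θ'‖ ≤ L * ‖θ - θ'‖
  norm_right_sub_le ⦃θ⦄ : θ ∈ K → ∀ ⦃θ'⦄, θ' ∈ K → ‖q θ - q θ'‖ ≤ L * ‖θ - θ'‖
  norm_sub_le_left ⦃θ⦄ : θ ∈ K → ∀ ⦃θ'⦄, θ' ∈ K → ‖θ - θ'‖ ≤ L * ‖p θ - p θ'‖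
  norm_sub_le_right ⦃θ⦄ : θ ∈ K → ∀ ⦃θ'⦄, θ' ∈ K → ‖θ - θ'‖ ≤ L * ‖q θ - q θ'‖
  abs_dotProduct_add_one_le ⦃θ⦄ : θ ∈ K → ∀ ⦃θ'⦄, θ' ∈ K →
    |p θ ⬝ᵥ q θ' + 1| ≤ L * ‖θ - θ'‖ ^ 2

namespace IsDualPair

lemma symm (h : IsDualPair K L p q) : IsDualPair K L q p where
  one_le := h.one_le
  dotProduct_eq _ hθ := by rw [dotProduct_comm, h.dotProduct_eq hθ]
  norm_left_le := h.norm_right_le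
  norm_right_le := h.norm_left_le
  norm_left_sub_le := h.norm_right_sub_le
  norm_right_sub_le := h.norm_left_sub_le
  norm_sub_le_left := h.norm_sub_le_right
  norm_sub_le_right := h.norm_sub_le_left
  abs_dotProduct_add_one_le _ hθ _ hθ' := by
    rw [dotProduct_comm, norm_sub_rev]
    exact h.abs_dotProduct_add_one_le hθ' hθ

variable {θ θ' : ℝ × ℝ} {N r δ κ : ℝ} {x : (ι → ℝ) × ℝ}

lemma mem_plate_of_norm_sub_le (h : IsDualPair K L p q) (hθ : θ ∈ K) (hθ' : θ' ∈ K)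
    (hκ : ‖θ - θ'‖ ≤ κ) (hx : x ∈ plate (p θ) (q θ) N r δ) :
    x ∈ plate (p θ') (q θ') N (r + N * (L * κ))
      (δ + Fintype.card ι * (L * κ * r) + N * (L * κ ^ 2)) := by
  obtain ⟨hlen, hwidth, hthick⟩ := hx
  have hL := h.one_le
  have hN : 0 ≤ N := (abs_nonneg _).trans hlen
  have hr : 0 ≤ r := (norm_nonneg _).trans hwidth
  have hκ₀ : 0 ≤ κ := (norm_nonneg _).trans hκ
  refine ⟨hlen, ?_, ?_⟩
  · calc ‖x.1 - x.2 • p θ'‖ = ‖(x.1 - x.2 • p θ) + x.2 • (p θ - p θ')‖ := by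
          rw [smul_sub, sub_add_sub_cancel]
      _ ≤ ‖x.1 - x.2 • p θ‖ + |x.2| * ‖p θ - p θ'‖ :=
        (norm_add_le _ _).trans_eq (by rw [norm_smul, Real.norm_eq_abs])
      _ ≤ r + N * (L * κ) := by
        gcongr
        exact (h.norm_left_sub_le hθ hθ').trans (by gcongr)
  · have pairing_eq : pairing (q θ', 1) x = pairing (q θ, 1) x +
        (q θ' - q θ) ⬝ᵥ (x.1 - x.2 • p θ) + x.2 * (p θ ⬝ᵥ q θ' + 1) := by
      simp only [pairing_apply, sub_dotProduct, dotProduct_sub, dotProduct_smul, smul_eq_mul,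
        dotProduct_comm (q _) (p θ), h.dotProduct_eq hθ]
      ring
    rw [pairing_eq]
    refine (abs_add_three _ _ _).trans (add_le_add_three hthick ?_ ?_)
    · refine (abs_dotProduct_le _ _).trans ?_
      gcongr
      rw [norm_sub_rev]
      exact (h.norm_right_sub_le hθ hθ').trans (by gcongr)
    · rw [abs_mul]
      gcongr
      exact (h.abs_dotProduct_add_one_le hθ hθ').trans (by gcongr)

end IsDualPair

end DualPairs

section NearCone

variable {K : Set (ℝ × ℝ)} {L : ℝ} {p q : ℝ × ℝ → Fin 3 → ℝ}

/-- The integer points of height about `2 ^ J` at distance about `2 ^ (-J)` from the cone spanned by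
the `(p θ, 1)`, `θ ∈ K`. The range of heights is left wider than dyadic. -/
def nearCone (K : Set (ℝ × ℝ)) (p q : ℝ × ℝ → Fin 3 → ℝ) (J : ℕ) : Set ((Fin 3 → ℤ) × ℤ) :=
  {X | 2 ^ J ≤ X.2 ∧ ∃ θ ∈ K, castPoint ℝ X ∈ plate (p θ) (q θ) (4 * 2 ^ J) 1 (1 / 2 ^ J)}

/-- The integer points of the polar body of a plate about `(p θ, 1)` that contains the part of the
cone of height about `2 ^ J` with parameter within `2 ^ h / 2 ^ J` of `θ`. -/
noncomputable def dualPoints (p q : ℝ × ℝ → Fin 3 → ℝ) (J h : ℕ) (θ : ℝ × ℝ) :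
    Finset ((Fin 3 → ℤ) × ℤ) :=
  platePoints (q θ) (p θ) (2 ^ J / 4 ^ h) (1 / 2 ^ h) (1 / 2 ^ J)

/-- The part of `dualPoints p q J h θ` of height about `2 ^ j`. -/
noncomputable def dualLayer (p q : ℝ × ℝ → Fin 3 → ℝ) (J h j : ℕ) (θ : ℝ × ℝ) :
    Finset ((Fin 3 → ℤ) × ℤ) :=
  {Y ∈ dualPoints p q J h θ | 2 ^ j ≤ Y.2 ∧ Y.2 < 2 ^ (j + 1)}

lemma IsDualPair.mem_nearPlate (hK : IsDualPair K L p q) {θ θ' : ℝ × ℝ} (hθ : θ ∈ K)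
    (hθ' : θ' ∈ K) {J h : ℕ} (hκ : ‖θ - θ'‖ ≤ 2 ^ h / 2 ^ J) {x : (Fin 3 → ℝ) × ℝ}
    (hx : x ∈ plate (p θ) (q θ) (4 * 2 ^ J) 1 (1 / 2 ^ J)) :
    x ∈ plate (p θ') (q θ') (8 * L * 2 ^ J) (8 * L * 2 ^ h) (8 * L * (4 ^ h / 2 ^ J)) := by
  have hL := hK.one_le
  have h2 : (1 : ℝ) ≤ 2 ^ h := one_le_pow₀ one_le_two
  have h4 : (4 : ℝ) ^ h = 2 ^ h * 2 ^ h := by rw [← mul_pow]; norm_num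
  have hL2 : 1 ≤ L * 2 ^ h := one_le_mul_of_one_le_of_one_le hL h2
  refine plate_mono ?_ ?_ ?_ (hK.mem_plate_of_norm_sub_le hθ hθ' hκ hx)
  · gcongr; linarith
  · calc 1 + 4 * 2 ^ J * (L * (2 ^ h / 2 ^ J)) = 1 + 4 * (L * 2 ^ h) := by field_simp
      _ ≤ 8 * L * 2 ^ h := by linarith
  · rw [Fintype.card_fin, Nat.cast_ofNat]
    calc 1 / 2 ^ J + 3 * (L * (2 ^ h / 2 ^ J) * 1) + 4 * 2 ^ J * (L * (2 ^ h / 2 ^ J) ^ 2)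
      _ = (1 + 3 * (L * 2 ^ h) + 4 * L * 4 ^ h) / 2 ^ J := by rw [h4]; field_simp
      _ ≤ 8 * L * 4 ^ h / 2 ^ J := by
        gcongr
        rw [h4]
        nlinarith
      _ = 8 * L * (4 ^ h / 2 ^ J) := mul_div_assoc _ _ _

lemma exists_card_nearPlate_le (L : ℝ) : ∃ C > 0, ∀ ⦃K p q⦄, IsDualPair K L p q →
    ∀ ⦃J h : ℕ⦄, h ≤ J → ∀ ⦃θ⦄, θ ∈ K →
      (#(platePoints (p θ) (q θ) (8 * L * 2 ^ J) (8 * L * 2 ^ h) (8 * L * (4 ^ h / 2 ^ J))) : ℝ) ≤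
        C * 16 ^ h * #(dualPoints p q J h θ) := by
  obtain ⟨C, hC, transfer⟩ := card_platePoints_le (Fintype.card_fin 3) L
  obtain hL | hL := lt_or_ge L 1
  · exact ⟨1, one_pos, fun K p q hK ↦ absurd hK.one_le hL.not_ge⟩
  refine ⟨C * (8 * L) ^ 4, by positivity, fun K p q hK J h hhJ θ hθ ↦ ?_⟩
  have h16 : (16 : ℝ) ^ h = 4 ^ h * 4 ^ h := by rw [← mul_pow]; norm_num
  have h4 : (4 : ℝ) ^ h = 2 ^ h * 2 ^ h := by rw [← mul_pow]; norm_num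
  have hsub : #(platePoints (q θ) (p θ) (1 / (8 * L * (4 ^ h / 2 ^ J))) (1 / (8 * L * 2 ^ h))
      (1 / (8 * L * 2 ^ J))) ≤ #(dualPoints p q J h θ) := by
    refine card_le_card fun Y hY ↦ ?_
    rw [dualPoints, mem_platePoints] at *
    refine plate_mono ?_ ?_ ?_ hY
    · rw [one_div, mul_inv, inv_div]
      exact mul_le_of_le_one_left (by positivity) (inv_le_one_of_one_le₀ (by linarith))
    · gcongr
      exact le_mul_of_one_le_left (by positivity) (by linarith)
    · gcongr
      exact le_mul_of_one_le_left (by positivity) (by linarith)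
  calc _ ≤ _ := transfer (hK.dotProduct_eq hθ) (hK.norm_left_le hθ) (hK.norm_right_le hθ)
        (by positivity) (by positivity) (by gcongr; norm_num)
    _ = C * (8 * L) ^ 4 * 16 ^ h * #(platePoints (q θ) (p θ) (1 / (8 * L * (4 ^ h / 2 ^ J)))
          (1 / (8 * L * 2 ^ h)) (1 / (8 * L * 2 ^ J))) := by
      rw [h16, h4]; field_simp
    _ ≤ _ := by gcongr

lemma mem_dualLayer {J h j : ℕ} {θ : ℝ × ℝ} {Y : (Fin 3 → ℤ) × ℤ} :
    Y ∈ dualLayer p q J h j θ ↔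
      castPoint ℝ Y ∈ plate (q θ) (p θ) (2 ^ J / 4 ^ h) (1 / 2 ^ h) (1 / 2 ^ J) ∧
        2 ^ j ≤ Y.2 ∧ Y.2 < 2 ^ (j + 1) := by
  rw [dualLayer, dualPoints, mem_filter, mem_platePoints]

lemma dualLayer_subset_nearCone {J h j : ℕ} (hj : j ≤ J) {θ : ℝ × ℝ} (hθ : θ ∈ K) :
    (dualLayer p q J h j θ : Set _) ⊆ nearCone K q p j := by
  intro Y hY
  obtain ⟨⟨-, hwidth, hthick⟩, hlow, hup⟩ := mem_dualLayer.1 (mem_coe.1 hY)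
  refine ⟨hlow, θ, hθ, ?_, hwidth.trans ?_, hthick.trans ?_⟩
  · have hup' : (Y.2 : ℝ) < 2 ^ (j + 1) := by exact_mod_cast hup
    have hlow' : (2 : ℝ) ^ j ≤ Y.2 := by exact_mod_cast hlow
    have : (0 : ℝ) < 2 ^ j := by positivity
    rw [pow_succ] at hup'
    rw [castPoint_snd, abs_of_pos (by linarith)]
    linarith
  · exact div_le_one_of_le₀ (one_le_pow₀ one_le_two) (by positivity)
  · gcongr; norm_num

lemma IsDualPair.norm_sub_le_of_mem_dualLayer (hK : IsDualPair K L p q) {J h j : ℕ}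
    {θ θ' : ℝ × ℝ} (hθ : θ ∈ K) (hθ' : θ' ∈ K) {Y : (Fin 3 → ℤ) × ℤ}
    (hY : Y ∈ dualLayer p q J h j θ) (hY' : Y ∈ dualLayer p q J h j θ') :
    ‖θ - θ'‖ ≤ L * (2 / 2 ^ h / 2 ^ j) := by
  obtain ⟨⟨-, hwidth, -⟩, hlow, -⟩ := mem_dualLayer.1 hY
  obtain ⟨⟨-, hwidth', -⟩, -⟩ := mem_dualLayer.1 hY'
  have hL := hK.one_le
  have hlow' : (2 : ℝ) ^ j ≤ Y.2 := by exact_mod_cast hlow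
  refine (hK.norm_sub_le_right hθ hθ').trans ?_
  gcongr
  rw [le_div_iff₀' (by positivity)]
  calc 2 ^ j * ‖q θ - q θ'‖ ≤ Y.2 * ‖q θ - q θ'‖ := by gcongr
    _ = ‖(Y.2 : ℝ) • (q θ - q θ')‖ := by
      rw [norm_smul, Real.norm_of_nonneg (hlow'.trans' (by positivity))]
    _ = ‖((castPoint ℝ Y).1 - (Y.2 : ℝ) • q θ') - ((castPoint ℝ Y).1 - (Y.2 : ℝ) • q θ)‖ := by
      rw [smul_sub]; congr 1; abel
    _ ≤ 1 / 2 ^ h + 1 / 2 ^ h := (norm_sub_le _ _).trans (add_le_add hwidth' hwidth)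
    _ = 2 / 2 ^ h := by ring

lemma IsDualPair.card_filter_mem_dualLayer_le (hK : IsDualPair K L p q) {J h j : ℕ}
    (hj : j + 2 * h ≤ J)
    {T : Finset (ℝ × ℝ)} (hTK : ↑T ⊆ K) (hT : Set.InjOn (cell (2 ^ h / 2 ^ J)) T)
    (Y : (Fin 3 → ℤ) × ℤ) :
    (#{θ ∈ T | Y ∈ dualLayer p q J h j θ} : ℝ) ≤ (7 * L) ^ 2 * 4 ^ (J - 2 * h - j) := by
  have hL := hK.one_le
  obtain ⟨i, rfl⟩ := Nat.exists_eq_add_of_le hj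
  have h2 : (1 : ℝ) ≤ 2 ^ i := one_le_pow₀ one_le_two
  refine (card_le_of_injOn_cell (D := L * (2 / 2 ^ h / 2 ^ j)) (by positivity)
    (hT.mono (filter_subset _ _)) ?_).trans ?_
  · intro θ hθ θ' hθ'
    rw [mem_filter] at hθ hθ'
    exact hK.norm_sub_le_of_mem_dualLayer (hTK hθ.1) (hTK hθ'.1) hθ.2 hθ'.2
  calc _ = (4 * (L * 2 ^ i) + 3) ^ 2 := by
        rw [pow_add, pow_add, pow_mul' (2 : ℝ) 2 h]; field_simp; ring
    _ ≤ (7 * (L * 2 ^ i)) ^ 2 := by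
      gcongr
      linarith [one_le_mul_of_one_le_of_one_le hL h2]
    _ = (7 * L) ^ 2 * 4 ^ i := by
      rw [show (4 : ℝ) = 2 ^ 2 by norm_num, ← pow_mul]; ring
    _ = _ := by congr 2; omega

lemma IsDualPair.card_le (hK : IsDualPair K L p q) {J h : ℕ} (hJ : h ≤ J)
    {T : Finset (ℝ × ℝ)} (hTK : ↑T ⊆ K) (hT : Set.InjOn (cell (2 ^ h / 2 ^ J)) T) :
    (#T : ℝ) ≤ (7 * L ^ 2) ^ 2 * 4 ^ (J - h) := by
  have hL := hK.one_le
  obtain ⟨i, rfl⟩ := Nat.exists_eq_add_of_le hJ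
  have h2 : (1 : ℝ) ≤ 2 ^ i := one_le_pow₀ one_le_two
  refine (card_le_of_injOn_cell (D := L * (L + L)) (by positivity) hT ?_).trans ?_
  · intro θ hθ θ' hθ'
    refine (hK.norm_sub_le_left (hTK hθ) (hTK hθ')).trans ?_
    gcongr
    exact (norm_sub_le _ _).trans
      (add_le_add (hK.norm_left_le (hTK hθ)) (hK.norm_left_le (hTK hθ')))
  calc _ = (4 * (L ^ 2 * 2 ^ i) + 3) ^ 2 := by
        rw [pow_add]; field_simp; ring
    _ ≤ (7 * (L ^ 2 * 2 ^ i)) ^ 2 := by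
      gcongr
      linarith [one_le_mul_of_one_le_of_one_le (one_le_pow₀ hL (n := 2)) h2]
    _ = (7 * L ^ 2) ^ 2 * 4 ^ i := by
      rw [show (4 : ℝ) = 2 ^ 2 by norm_num, ← pow_mul]; ring
    _ = _ := by congr 2; omega

lemma IsDualPair.sum_card_dualLayer_le (hK : IsDualPair K L p q) {J h j : ℕ} (hj : j + 2 * h ≤ J)
    {T : Finset (ℝ × ℝ)} (hTK : ↑T ⊆ K) (hT : Set.InjOn (cell (2 ^ h / 2 ^ J)) T) {B : ℝ}
    (hB : ∀ U : Finset ((Fin 3 → ℤ) × ℤ), ↑U ⊆ nearCone K q p j → (#U : ℝ) ≤ B) :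
    ∑ θ ∈ T, (#(dualLayer p q J h j θ) : ℝ) ≤ (7 * L) ^ 2 * 4 ^ (J - 2 * h - j) * B := by
  classical
  let U := T.biUnion (dualLayer p q J h j)
  have hU : (U : Set _) ⊆ nearCone K q p j := by
    simp only [U, coe_biUnion, Set.iUnion_subset_iff]
    exact fun θ hθ ↦ dualLayer_subset_nearCone (by omega) (hTK hθ)
  have filter_eq (θ) (hθ : θ ∈ T) : {Y ∈ U | Y ∈ dualLayer p q J h j θ} = dualLayer p q J h j θ :=
    filter_mem_eq_inter.trans (inter_eq_right.2 (subset_biUnion_of_mem _ hθ))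
  calc ∑ θ ∈ T, (#(dualLayer p q J h j θ) : ℝ)
    _ = ∑ θ ∈ T, (#{Y ∈ U | Y ∈ dualLayer p q J h j θ} : ℝ) :=
      sum_congr rfl fun θ hθ ↦ by rw [filter_eq θ hθ]
    _ = ∑ Y ∈ U, (#{θ ∈ T | Y ∈ dualLayer p q J h j θ} : ℝ) := by
      exact_mod_cast sum_card_bipartiteAbove_eq_sum_card_bipartiteBelow
        (fun θ Y ↦ Y ∈ dualLayer p q J h j θ)
    _ ≤ ∑ _Y ∈ U, (7 * L) ^ 2 * 4 ^ (J - 2 * h - j) :=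
      sum_le_sum fun Y _ ↦ hK.card_filter_mem_dualLayer_le hj hTK hT Y
    _ ≤ _ := by
      rw [sum_const, nsmul_eq_mul, mul_comm]
      gcongr
      exact hB U hU

lemma mem_dualLayer_of_pos {J h : ℕ} (hJ : 2 * h ≤ J) {θ : ℝ × ℝ} {Y : (Fin 3 → ℤ) × ℤ}
    (hY : Y ∈ dualPoints p q J h θ) (hpos : 0 < Y.2) :
    ∃ j ∈ range (J - 2 * h + 1), Y ∈ dualLayer p q J h j θ := by
  rw [dualPoints, mem_platePoints] at hY
  obtain ⟨j, hlow, hup⟩ := exists_nat_pow_near (Int.add_one_le_iff.2 hpos) (one_lt_two (α := ℤ))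
  refine ⟨j, ?_, mem_dualLayer.2 ⟨hY, hlow, hup⟩⟩
  have hlow' : (2 : ℝ) ^ j ≤ 2 ^ (J - 2 * h) := calc
    (2 : ℝ) ^ j ≤ Y.2 := by exact_mod_cast hlow
    _ ≤ 2 ^ J / 4 ^ h := (le_abs_self _).trans hY.1
    _ = 2 ^ (J - 2 * h) := by
      rw [pow_sub₀ _ two_ne_zero hJ, pow_mul, div_eq_mul_inv]; norm_num
  exact mem_range_succ_iff.2 ((pow_le_pow_iff_right₀ one_lt_two).1 hlow')

lemma card_dualPoints_le {J h : ℕ} (hh : 1 ≤ h) (hJ : 2 * h ≤ J) (θ : ℝ × ℝ) :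
    #(dualPoints p q J h θ) ≤ 1 + 2 * ∑ j ∈ range (J - 2 * h + 1), #(dualLayer p q J h j θ) := by
  classical
  let P := (range (J - 2 * h + 1)).biUnion fun j ↦ dualLayer p q J h j θ
  let P' : Finset ((Fin 3 → ℤ) × ℤ) := P.image Neg.neg
  have hsub : dualPoints p q J h θ ⊆ insert 0 (P ∪ P') := by
    intro Y hY
    have hneg : -Y ∈ dualPoints p q J h θ := by
      rw [dualPoints, mem_platePoints, map_neg] at *
      exact neg_mem_plate hY
    simp only [mem_insert, mem_union, P', mem_image, P, mem_biUnion]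
    obtain hlt | heq | hgt := lt_trichotomy Y.2 0
    · exact .inr (.inr ⟨-Y, mem_dualLayer_of_pos hJ hneg (neg_pos.2 hlt), neg_neg Y⟩)
    · left
      rw [dualPoints, mem_platePoints] at hY
      have hfst : ‖(castPoint ℝ Y).1‖ < 1 := by
        have := hY.2.1
        rw [castPoint_snd, heq, Int.cast_zero, zero_smul, sub_zero] at this
        exact this.trans_lt ((div_lt_one (by positivity)).2 (one_lt_pow₀ one_lt_two (by omega)))
      refine eq_zero_of_norm_lt_one ?_
      rw [← norm_castPoint]
      exact max_lt hfst (by simp [heq])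
    · exact .inr (.inl (mem_dualLayer_of_pos hJ hY hgt))
  calc #(dualPoints p q J h θ) ≤ #(P ∪ P') + 1 :=
        (card_le_card hsub).trans (card_insert_le _ _)
    _ ≤ #P + #P + 1 := by
      gcongr
      exact (card_union_le _ _).trans (Nat.add_le_add_left card_image_le _)
    _ = 1 + 2 * #P := by ring
    _ ≤ _ := by gcongr; exact card_biUnion_le

lemma IsDualPair.exists_card_le_sum_card_nearPlate (hK : IsDualPair K L p q) {h J : ℕ}
    {A : Finset ((Fin 3 → ℤ) × ℤ)} (hA : ↑A ⊆ nearCone K p q J) :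
    ∃ T : Finset (ℝ × ℝ), ↑T ⊆ K ∧ Set.InjOn (cell (2 ^ h / 2 ^ J)) T ∧ #A ≤ ∑ θ ∈ T,
      #(platePoints (p θ) (q θ) (8 * L * 2 ^ J) (8 * L * 2 ^ h) (8 * L * (4 ^ h / 2 ^ J))) := by
  classical
  have exists_param (X) (hX : X ∈ A) : ∃ θ ∈ K,
      castPoint ℝ X ∈ plate (p θ) (q θ) (4 * 2 ^ J) 1 (1 / 2 ^ J) := (hA hX).2
  choose! param param_mem mem_plate using exists_param
  obtain ⟨T, hT, hinj, hcover⟩ := exists_injOn_cell_image_eq (2 ^ h / 2 ^ J) (A.image param)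
  have hTK : ↑T ⊆ K := fun θ hθ ↦ by
    obtain ⟨X, hX, rfl⟩ := mem_image.1 (hT hθ)
    exact param_mem X hX
  refine ⟨T, hTK, hinj, (card_le_card fun X hX ↦ ?_).trans card_biUnion_le⟩
  obtain ⟨θ, hθ, hcell⟩ := hcover _ (mem_image_of_mem param hX)
  exact mem_biUnion.2 ⟨θ, hθ, mem_platePoints.2 <| hK.mem_nearPlate (param_mem X hX) (hTK hθ)
    (norm_sub_le_of_cell_eq (by positivity) hcell.symm) (mem_plate X hX)⟩

lemma IsDualPair.sum_card_dualPoints_le (hK : IsDualPair K L p q) {h J : ℕ} (hh : 1 ≤ h)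
    (hJ : 2 * h ≤ J) {T : Finset (ℝ × ℝ)} (hTK : ↑T ⊆ K)
    (hT : Set.InjOn (cell (2 ^ h / 2 ^ J)) T) {B : ℕ → ℝ}
    (hB : ∀ j ≤ J - 2 * h, ∀ U : Finset ((Fin 3 → ℤ) × ℤ), ↑U ⊆ nearCone K q p j → #U ≤ B j) :
    ∑ θ ∈ T, (#(dualPoints p q J h θ) : ℝ) ≤ 2 * (7 * L ^ 2) ^ 2 *
      (4 ^ (J - h) + ∑ j ∈ range (J - 2 * h + 1), 4 ^ (J - 2 * h - j) * B j) := by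
  have hLL : (7 * L) ^ 2 ≤ (7 * L ^ 2) ^ 2 := by
    have := le_self_pow₀ hK.one_le two_ne_zero
    have := hK.one_le
    gcongr
  have layer (j) (hj : j ∈ range (J - 2 * h + 1)) :
      ∑ θ ∈ T, (#(dualLayer p q J h j θ) : ℝ) ≤ (7 * L ^ 2) ^ 2 * (4 ^ (J - 2 * h - j) * B j) := by
    have hj := mem_range_succ_iff.1 hj
    have hB₀ : 0 ≤ B j := by simpa using hB j hj ∅ (by simp)
    rw [← mul_assoc]
    exact (hK.sum_card_dualLayer_le (by omega) hTK hT (hB j hj)).trans (by gcongr)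
  calc ∑ θ ∈ T, (#(dualPoints p q J h θ) : ℝ)
    _ ≤ ∑ θ ∈ T, (1 + 2 * ∑ j ∈ range (J - 2 * h + 1), (#(dualLayer p q J h j θ) : ℝ)) :=
      sum_le_sum fun θ _ ↦ by exact_mod_cast card_dualPoints_le hh hJ θ
    _ = #T + 2 * ∑ j ∈ range (J - 2 * h + 1), ∑ θ ∈ T, (#(dualLayer p q J h j θ) : ℝ) := by
      rw [sum_add_distrib, ← mul_sum, sum_comm]
      simp
    _ ≤ 2 * ((7 * L ^ 2) ^ 2 * 4 ^ (J - h)) + 2 * ∑ j ∈ range (J - 2 * h + 1),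
          (7 * L ^ 2) ^ 2 * (4 ^ (J - 2 * h - j) * B j) := by
      refine add_le_add ?_ (mul_le_mul_of_nonneg_left (sum_le_sum layer) zero_le_two)
      exact (hK.card_le (by omega) hTK hT).trans (le_mul_of_one_le_left (by positivity) one_le_two)
    _ = _ := by rw [← mul_sum]; ring

lemma exists_card_le_sum_of_subset_nearCone (L : ℝ) : ∃ C > 0, ∀ ⦃K p q⦄, IsDualPair K L p q →
    ∀ ⦃h J : ℕ⦄, 1 ≤ h → 2 * h ≤ J → ∀ ⦃B : ℕ → ℝ⦄,
      (∀ j ≤ J - 2 * h, ∀ U : Finset ((Fin 3 → ℤ) × ℤ), ↑U ⊆ nearCone K q p j → #U ≤ B j) →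
      ∀ A : Finset ((Fin 3 → ℤ) × ℤ), ↑A ⊆ nearCone K p q J →
        #A ≤ C * (4 ^ (h + J) + ∑ j ∈ range (J - 2 * h + 1), 4 ^ (J - j) * B j) := by
  obtain ⟨C, hC, card_near⟩ := exists_card_nearPlate_le L
  obtain hL | hL := lt_or_ge L 1
  · exact ⟨1, one_pos, fun K p q hK ↦ absurd hK.one_le hL.not_ge⟩
  refine ⟨C * (2 * (7 * L ^ 2) ^ 2), by positivity, fun K p q hK h J hh hJ B hB A hA ↦ ?_⟩
  obtain ⟨T, hTK, hT, hcard⟩ := hK.exists_card_le_sum_card_nearPlate (h := h) hA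
  have pow_eq {i : ℕ} (hi : i + 2 * h ≤ J) : (16 : ℝ) ^ h * 4 ^ (J - 2 * h - i) = 4 ^ (J - i) := by
    rw [show (16 : ℝ) = 4 ^ 2 by norm_num, ← pow_mul, ← pow_add]
    congr 1
    omega
  calc (#A : ℝ)
    _ ≤ ∑ θ ∈ T, (#(platePoints (p θ) (q θ) (8 * L * 2 ^ J) (8 * L * 2 ^ h)
          (8 * L * (4 ^ h / 2 ^ J))) : ℝ) := by exact_mod_cast hcard
    _ ≤ ∑ θ ∈ T, C * 16 ^ h * #(dualPoints p q J h θ) :=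
      sum_le_sum fun θ hθ ↦ card_near hK (by omega) (hTK hθ)
    _ ≤ C * 16 ^ h * (2 * (7 * L ^ 2) ^ 2 * (4 ^ (J - h) +
          ∑ j ∈ range (J - 2 * h + 1), 4 ^ (J - 2 * h - j) * B j)) := by
      rw [← mul_sum]
      gcongr
      exact hK.sum_card_dualPoints_le hh hJ hTK hT hB
    _ = C * (2 * (7 * L ^ 2) ^ 2) * (16 ^ h * 4 ^ (J - h) +
          ∑ j ∈ range (J - 2 * h + 1), 16 ^ h * 4 ^ (J - 2 * h - j) * B j) := by
      simp only [mul_assoc, ← mul_sum]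
      ring
    _ = _ := by
      rw [sum_congr rfl fun j hj ↦ by rw [pow_eq (by have := mem_range_succ_iff.1 hj; omega)],
        show (16 : ℝ) = 4 ^ 2 by norm_num, ← pow_mul, ← pow_add,
        show 2 * h + (J - h) = h + J by omega]

lemma exists_card_le_of_subset_nearCone_of_lt (L : ℝ) (n : ℕ) : ∃ M : ℝ, ∀ ⦃K p q⦄,
    IsDualPair K L p q → ∀ J < n, ∀ A : Finset ((Fin 3 → ℤ) × ℤ), ↑A ⊆ nearCone K p q J →
      #A ≤ M := by
  obtain hL | _ := lt_or_ge L 1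
  · exact ⟨0, fun K p q hK ↦ absurd hK.one_le hL.not_ge⟩
  let S := (finite_setOf_norm_castPoint_le (ι := Fin 3) (1 + 4 * 2 ^ n * (1 + L))).toFinset
  refine ⟨#S, fun K p q hK J hJ A hA ↦ Nat.cast_le.2 (card_le_card fun X hX ↦ ?_)⟩
  obtain ⟨-, θ, hθ, hX⟩ := hA hX
  refine (Set.Finite.mem_toFinset _).2 ((norm_le_of_mem_plate hX).trans ?_)
  gcongr
  · exact one_le_two
  · exact hK.norm_left_le hθ

lemma mul_geom_sum_le_pow_div_two {C ρ : ℝ} (hC : 0 ≤ C) (hρ : 1 < ρ) {k n : ℕ} (hkn : k ≤ n)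
    (hCρ : 2 * C * ρ / (ρ - 1) ≤ ρ ^ k) :
    C * ∑ j ∈ range (n - k + 1), ρ ^ j ≤ ρ ^ n / 2 := by
  have : 0 < ρ - 1 := sub_pos.2 hρ
  calc C * ∑ j ∈ range (n - k + 1), ρ ^ j
    _ ≤ C * (ρ ^ (n - k + 1) / (ρ - 1)) := by
      rw [geom_sum_eq hρ.ne']
      gcongr
      linarith
    _ = 2 * C * ρ / (ρ - 1) * ρ ^ (n - k) / 2 := by rw [pow_succ]; ring
    _ ≤ ρ ^ k * ρ ^ (n - k) / 2 := by gcongr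
    _ = ρ ^ n / 2 := by rw [← pow_add, Nat.add_sub_cancel' hkn]

lemma exists_card_le_of_subset_nearCone (L : ℝ) {ρ : ℝ} (hρ : 1 < ρ) : ∃ M > 0, ∀ ⦃K p q⦄,
    IsDualPair K L p q → ∀ ⦃J⦄, ∀ A : Finset ((Fin 3 → ℤ) × ℤ), ↑A ⊆ nearCone K p q J →
      #A ≤ M * (4 * ρ) ^ J := by
  obtain ⟨C, hC, recursion⟩ := exists_card_le_sum_of_subset_nearCone L
  obtain ⟨n, hn⟩ := pow_unbounded_of_one_lt (2 * C * ρ / (ρ - 1)) hρ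
  obtain ⟨h, hh, hCρ⟩ : ∃ h ≥ 1, 2 * C * ρ / (ρ - 1) ≤ ρ ^ (2 * h) :=
    ⟨n + 1, by omega, hn.le.trans (pow_le_pow_right₀ hρ.le (by omega))⟩
  obtain ⟨M, hM⟩ := exists_card_le_of_subset_nearCone_of_lt L (2 * h)
  obtain ⟨M', hM', hMM', hCM'⟩ : ∃ M' > 0, M ≤ M' ∧ C * 4 ^ h ≤ M' / 2 :=
    ⟨max M (2 * (C * 4 ^ h)), lt_max_of_lt_right (by positivity), le_max_left _ _,
      by linarith [le_max_right M (2 * (C * 4 ^ h))]⟩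
  refine ⟨M', hM', fun K p q hK J ↦ ?_⟩
  induction J using Nat.strong_induction_on generalizing K p q with
  | _ J ih =>
    intro A hA
    obtain hJ | hJ := lt_or_ge J (2 * h)
    · exact (hM hK J hJ A hA).trans <| hMM'.trans <|
        le_mul_of_one_le_right hM'.le (one_le_pow₀ (by linarith))
    have geom := mul_geom_sum_le_pow_div_two hC.le hρ hJ hCρ
    calc (#A : ℝ)
      _ ≤ C * (4 ^ (h + J) + ∑ j ∈ range (J - 2 * h + 1), 4 ^ (J - j) * (M' * (4 * ρ) ^ j)) :=
        recursion hK hh hJ (fun j hj U hU ↦ ih j (by omega) K q p hK.symm U hU) A hA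
      _ = C * (4 ^ (h + J) + ∑ j ∈ range (J - 2 * h + 1), 4 ^ J * M' * ρ ^ j) := by
        congr 2
        refine sum_congr rfl fun j hj ↦ ?_
        have hj : j ≤ J := (mem_range_succ_iff.1 hj).trans (Nat.sub_le _ _)
        rw [mul_pow, ← pow_sub_mul_pow (4 : ℝ) hj]
        ring
      _ = 4 ^ J * (C * 4 ^ h + M' * (C * ∑ j ∈ range (J - 2 * h + 1), ρ ^ j)) := by
        rw [← mul_sum]; ring
      _ ≤ 4 ^ J * (M' / 2 * ρ ^ J + M' * (ρ ^ J / 2)) := by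
        refine mul_le_mul_of_nonneg_left (add_le_add ?_ (mul_le_mul_of_nonneg_left geom hM'.le))
          (by positivity)
        exact hCM'.trans (le_mul_of_one_le_right (by positivity) (one_le_pow₀ hρ.le))
      _ = M' * (4 * ρ) ^ J := by rw [mul_pow]; ring

end NearCone

section SqrtCone

/-- The parameters `(s, t)` for which `s`, `t` and `s + t - 1` lie in `[1/2, 2]`. -/
def sqrtParams : Set (ℝ × ℝ) :=
  {θ | θ.1 ∈ Set.Icc (1 / 2) 2 ∧ θ.2 ∈ Set.Icc (1 / 2) 2 ∧ θ.1 + θ.2 - 1 ∈ Set.Icc (1 / 2) 2}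

/-- The point `(a, b, c)` with `√a + √b = √c + 1`, `√a = θ.1` and `√b = θ.2`: the cone over these
points is the cone `√a + √b = √c + √d`. -/
def sqrtConePoint (θ : ℝ × ℝ) : Fin 3 → ℝ := ![θ.1 ^ 2, θ.2 ^ 2, (θ.1 + θ.2 - 1) ^ 2]

/-- The first three coordinates of the normal to the cone `√a + √b = √c + √d` at
`(sqrtConePoint θ, 1)`, scaled to have last coordinate `1`. -/
noncomputable def sqrtConeNormal (θ : ℝ × ℝ) : Fin 3 → ℝ :=
  ![-θ.1⁻¹, -θ.2⁻¹, (θ.1 + θ.2 - 1)⁻¹]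

variable {x y : ℝ}

lemma abs_sq_sub_sq_le (hx : x ∈ Set.Icc (1 / 2) 2) (hy : y ∈ Set.Icc (1 / 2) 2) :
    |x ^ 2 - y ^ 2| ≤ 4 * |x - y| := by
  rw [sq_sub_sq, abs_mul, abs_of_pos (by linarith [hx.1, hy.1] : 0 < x + y)]
  gcongr
  linarith [hx.2, hy.2]

lemma abs_sub_le_abs_sq_sub_sq (hx : x ∈ Set.Icc (1 / 2) 2) (hy : y ∈ Set.Icc (1 / 2) 2) :
    |x - y| ≤ |x ^ 2 - y ^ 2| := by
  rw [sq_sub_sq, abs_mul, abs_of_pos (by linarith [hx.1, hy.1] : 0 < x + y)]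
  exact le_mul_of_one_le_left (abs_nonneg _) (by linarith [hx.1, hy.1])

lemma abs_inv_sub_inv_le (hx : x ∈ Set.Icc (1 / 2) 2) (hy : y ∈ Set.Icc (1 / 2) 2) :
    |x⁻¹ - y⁻¹| ≤ 4 * |x - y| := by
  have hx₀ : 0 < x := by linarith [hx.1]
  have hy₀ : 0 < y := by linarith [hy.1]
  rw [inv_sub_inv hx₀.ne' hy₀.ne', abs_div, abs_sub_comm, abs_of_pos (mul_pos hx₀ hy₀),
    div_le_iff₀ (by positivity)]
  nlinarith [abs_nonneg (x - y), mul_le_mul hx.1 hy.1 (by norm_num) hx₀.le]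

lemma abs_sub_le_abs_inv_sub_inv (hx : x ∈ Set.Icc (1 / 2) 2) (hy : y ∈ Set.Icc (1 / 2) 2) :
    |x - y| ≤ 4 * |x⁻¹ - y⁻¹| := by
  have hx₀ : 0 < x := by linarith [hx.1]
  have hy₀ : 0 < y := by linarith [hy.1]
  rw [inv_sub_inv hx₀.ne' hy₀.ne', abs_div, abs_sub_comm y, abs_of_pos (mul_pos hx₀ hy₀),
    mul_div_assoc', le_div_iff₀ (by positivity)]
  nlinarith [abs_nonneg (x - y), mul_le_mul hx.2 hy.2 hy₀.le zero_le_two]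

lemma abs_sq_sub_div_le {d : ℝ} (hy : y ∈ Set.Icc (1 / 2) 2) (hd : |x - y| ≤ d) :
    |(x - y) ^ 2 / y| ≤ 2 * d ^ 2 := by
  have hy₀ : 0 < y := by linarith [hy.1]
  rw [abs_of_nonneg (by positivity), div_le_iff₀ hy₀]
  have : (x - y) ^ 2 ≤ d ^ 2 := sq_le_sq' (abs_le.1 hd).1 (abs_le.1 hd).2
  nlinarith [hy.1, sq_nonneg d]

lemma sqrtConePoint_dotProduct_add_one {θ θ' : ℝ × ℝ} (hθ' : θ' ∈ sqrtParams) :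
    sqrtConePoint θ ⬝ᵥ sqrtConeNormal θ' + 1 = -((θ.1 - θ'.1) ^ 2 / θ'.1) -
      (θ.2 - θ'.2) ^ 2 / θ'.2 +
      (θ.1 + θ.2 - 1 - (θ'.1 + θ'.2 - 1)) ^ 2 / (θ'.1 + θ'.2 - 1) := by
  obtain ⟨hs, ht, hw⟩ := hθ'
  have hs₀ : θ'.1 ≠ 0 := by linarith [hs.1]
  have ht₀ : θ'.2 ≠ 0 := by linarith [ht.1]
  have hw₀ : θ'.1 + θ'.2 - 1 ≠ 0 := by linarith [hw.1]
  simp only [sqrtConePoint, sqrtConeNormal, dotProduct, Fin.sum_univ_three, Matrix.cons_val]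
  field_simp
  ring

lemma norm_fin_three_le_iff {v : Fin 3 → ℝ} {r : ℝ} :
    ‖v‖ ≤ r ↔ |v 0| ≤ r ∧ |v 1| ≤ r ∧ |v 2| ≤ r := by
  simp [pi_norm_le_iff_of_nonempty, Fin.forall_fin_succ]

lemma abs_add_sub_one_sub_le (θ θ' : ℝ × ℝ) :
    |θ.1 + θ.2 - 1 - (θ'.1 + θ'.2 - 1)| ≤ 2 * ‖θ - θ'‖ := by
  rw [show θ.1 + θ.2 - 1 - (θ'.1 + θ'.2 - 1) = (θ.1 - θ'.1) + (θ.2 - θ'.2) by ring, two_mul]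
  exact (abs_add_le _ _).trans (add_le_add (norm_fst_le (θ - θ')) (norm_snd_le (θ - θ')))

variable {θ θ' : ℝ × ℝ}

lemma norm_sqrtConePoint_le (hθ : θ ∈ sqrtParams) : ‖sqrtConePoint θ‖ ≤ 12 := by
  have bound {x : ℝ} (hx : x ∈ Set.Icc (1 / 2) 2) : |x ^ 2| ≤ 12 := by
    rw [abs_sq]
    nlinarith [hx.1, hx.2]
  exact norm_fin_three_le_iff.2 ⟨bound hθ.1, bound hθ.2.1, bound hθ.2.2⟩

lemma norm_sqrtConeNormal_le (hθ : θ ∈ sqrtParams) : ‖sqrtConeNormal θ‖ ≤ 12 := by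
  have bound {x : ℝ} (hx : x ∈ Set.Icc (1 / 2) 2) : |x⁻¹| ≤ 12 := by
    have hx₀ : 0 < x := by linarith [hx.1]
    rw [abs_of_pos (by positivity), inv_le_comm₀ hx₀ (by norm_num)]
    linarith [hx.1]
  refine norm_fin_three_le_iff.2 ⟨?_, ?_, bound hθ.2.2⟩
  · exact (abs_neg _).trans_le (bound hθ.1)
  · exact (abs_neg _).trans_le (bound hθ.2.1)

lemma norm_sqrtConePoint_sub_le (hθ : θ ∈ sqrtParams) (hθ' : θ' ∈ sqrtParams) :
    ‖sqrtConePoint θ - sqrtConePoint θ'‖ ≤ 12 * ‖θ - θ'‖ := by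
  have h₁ : |θ.1 - θ'.1| ≤ ‖θ - θ'‖ := norm_fst_le (θ - θ')
  have h₂ : |θ.2 - θ'.2| ≤ ‖θ - θ'‖ := norm_snd_le (θ - θ')
  have h₃ := abs_add_sub_one_sub_le θ θ'
  refine norm_fin_three_le_iff.2 ⟨?_, ?_, ?_⟩
  · exact (abs_sq_sub_sq_le hθ.1 hθ'.1).trans (by gcongr; norm_num)
  · exact (abs_sq_sub_sq_le hθ.2.1 hθ'.2.1).trans (by gcongr; norm_num)
  · exact (abs_sq_sub_sq_le hθ.2.2 hθ'.2.2).trans (by linarith [norm_nonneg (θ - θ')])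

lemma abs_neg_inv_sub_neg_inv (x y : ℝ) : |-x⁻¹ - -y⁻¹| = |x⁻¹ - y⁻¹| := by
  rw [neg_sub_neg, abs_sub_comm]

lemma norm_sqrtConeNormal_sub_le (hθ : θ ∈ sqrtParams) (hθ' : θ' ∈ sqrtParams) :
    ‖sqrtConeNormal θ - sqrtConeNormal θ'‖ ≤ 12 * ‖θ - θ'‖ := by
  have h₁ : |θ.1 - θ'.1| ≤ ‖θ - θ'‖ := norm_fst_le (θ - θ')
  have h₂ : |θ.2 - θ'.2| ≤ ‖θ - θ'‖ := norm_snd_le (θ - θ')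
  have h₃ := abs_add_sub_one_sub_le θ θ'
  refine norm_fin_three_le_iff.2 ⟨?_, ?_, ?_⟩
  · refine (abs_neg_inv_sub_neg_inv _ _).trans_le ((abs_inv_sub_inv_le hθ.1 hθ'.1).trans ?_)
    gcongr; norm_num
  · refine (abs_neg_inv_sub_neg_inv _ _).trans_le ((abs_inv_sub_inv_le hθ.2.1 hθ'.2.1).trans ?_)
    gcongr; norm_num
  · exact (abs_inv_sub_inv_le hθ.2.2 hθ'.2.2).trans (by linarith [norm_nonneg (θ - θ')])

lemma norm_sub_le_norm_sqrtConePoint_sub (hθ : θ ∈ sqrtParams) (hθ' : θ' ∈ sqrtParams) :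
    ‖θ - θ'‖ ≤ ‖sqrtConePoint θ - sqrtConePoint θ'‖ := by
  obtain ⟨h₁, h₂, -⟩ := norm_fin_three_le_iff.1 (le_refl ‖sqrtConePoint θ - sqrtConePoint θ'‖)
  exact max_le ((abs_sub_le_abs_sq_sub_sq hθ.1 hθ'.1).trans h₁)
    ((abs_sub_le_abs_sq_sub_sq hθ.2.1 hθ'.2.1).trans h₂)

lemma norm_sub_le_norm_sqrtConeNormal_sub (hθ : θ ∈ sqrtParams) (hθ' : θ' ∈ sqrtParams) :
    ‖θ - θ'‖ ≤ 4 * ‖sqrtConeNormal θ - sqrtConeNormal θ'‖ := by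
  obtain ⟨h₁, h₂, -⟩ := norm_fin_three_le_iff.1 (le_refl ‖sqrtConeNormal θ - sqrtConeNormal θ'‖)
  refine max_le ?_ ?_
  · refine (abs_sub_le_abs_inv_sub_inv hθ.1 hθ'.1).trans ?_
    gcongr
    exact (abs_neg_inv_sub_neg_inv _ _).symm.trans_le h₁
  · refine (abs_sub_le_abs_inv_sub_inv hθ.2.1 hθ'.2.1).trans ?_
    gcongr
    exact (abs_neg_inv_sub_neg_inv _ _).symm.trans_le h₂

lemma isDualPair_sqrtCone : IsDualPair sqrtParams 12 sqrtConePoint sqrtConeNormal where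
  one_le := by norm_num
  dotProduct_eq θ hθ := by
    have := sqrtConePoint_dotProduct_add_one (θ := θ) hθ
    simp only [sub_self, ne_eq, OfNat.ofNat_ne_zero, not_false_eq_true, zero_pow, zero_div] at this
    linarith
  norm_left_le _ hθ := norm_sqrtConePoint_le hθ
  norm_right_le _ hθ := norm_sqrtConeNormal_le hθ
  norm_left_sub_le _ hθ _ hθ' := norm_sqrtConePoint_sub_le hθ hθ'
  norm_right_sub_le _ hθ _ hθ' := norm_sqrtConeNormal_sub_le hθ hθ'
  norm_sub_le_left _ hθ _ hθ' := (norm_sub_le_norm_sqrtConePoint_sub hθ hθ').trans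
    (le_mul_of_one_le_left (norm_nonneg _) (by norm_num))
  norm_sub_le_right _ hθ _ hθ' := (norm_sub_le_norm_sqrtConeNormal_sub hθ hθ').trans
    (by gcongr; norm_num)
  abs_dotProduct_add_one_le θ _ θ' hθ' := by
    rw [sqrtConePoint_dotProduct_add_one hθ']
    have h₁ := abs_sq_sub_div_le hθ'.1 (norm_fst_le (θ - θ'))
    have h₂ := abs_sq_sub_div_le hθ'.2.1 (norm_snd_le (θ - θ'))
    have h₃ := abs_sq_sub_div_le hθ'.2.2 (abs_add_sub_one_sub_le θ θ')
    refine (abs_add_le _ _).trans ((add_le_add ((abs_sub _ _).trans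
      (add_le_add (abs_neg _).le le_rfl)) le_rfl).trans ?_)
    linarith

end SqrtCone

section Energy

/-- The integers `n` with `N < n ≤ 2 * N`. -/
noncomputable def dyadic (N : ℝ) : Finset ℕ := Ioc ⌊N⌋₊ ⌊2 * N⌋₊

variable {N : ℝ}

lemma mem_dyadic (hN : 0 ≤ N) {n : ℕ} : n ∈ dyadic N ↔ N < n ∧ n ≤ 2 * N := by
  rw [dyadic, mem_Ioc, Nat.floor_lt hN, Nat.le_floor_iff (by positivity)]

lemma card_dyadic_le (hN : 0 ≤ N) : #(dyadic N) ≤ 2 * N := by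
  rw [dyadic, Nat.card_Ioc]
  exact (Nat.cast_le.2 (Nat.sub_le _ _)).trans (Nat.floor_le (by positivity))

lemma sqrt_div_sqrt_mem_Icc (hN : 0 < N) {x y : ℝ} (hx : x ∈ Set.Icc N (2 * N))
    (hy : y ∈ Set.Icc N (2 * N)) : √x / √y ∈ Set.Icc (7 / 10) (10 / 7) := by
  have hy₀ : 0 < y := hN.trans_le hy.1
  rw [← Real.sqrt_div' _ hy₀.le]
  refine ⟨Real.le_sqrt_of_sq_le ?_, Real.sqrt_le_iff.2 ⟨by norm_num, ?_⟩⟩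
  · rw [le_div_iff₀ hy₀]
    linarith [hx.1, hy.2]
  · rw [div_le_iff₀ hy₀]
    linarith [hx.2, hy.1]

lemma mem_sqrtParams_and_abs_sub_le (hN : 1 ≤ N) {a b c d : ℝ} (ha : a ∈ Set.Icc N (2 * N))
    (hb : b ∈ Set.Icc N (2 * N)) (hc : c ∈ Set.Icc N (2 * N)) (hd : d ∈ Set.Icc N (2 * N))
    (h : |√a + √b - (√c + √d)| ≤ 1 / (100 * (N * √N))) :
    (√a / √d, √b / √d) ∈ sqrtParams ∧
      |c - d * (√a / √d + √b / √d - 1) ^ 2| ≤ 1 / (10 * N) := by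
  have hN₀ : 0 < N := by linarith
  have hd₀ : 0 < √d := Real.sqrt_pos.2 (hN₀.trans_le hd.1)
  obtain ⟨e, he⟩ : ∃ e, e = (√a + √b - (√c + √d)) / √d := ⟨_, rfl⟩
  have he_le : |e| ≤ 1 / (100 * N ^ 2) := by
    rw [he, abs_div, abs_of_pos hd₀, div_le_iff₀ hd₀]
    refine h.trans ?_
    calc 1 / (100 * (N * √N)) = 1 / (100 * N ^ 2) * √N := by
          field_simp
          exact (Real.sq_sqrt hN₀.le).symm
      _ ≤ 1 / (100 * N ^ 2) * √d := by gcongr; exact hd.1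
  have he_le' : |e| ≤ 1 / 100 := he_le.trans (by gcongr; nlinarith)
  have hw : √a / √d + √b / √d - 1 = √c / √d + e := by rw [he]; field_simp; ring
  obtain ⟨hs₁, hs₂⟩ := sqrt_div_sqrt_mem_Icc hN₀ ha hd
  obtain ⟨ht₁, ht₂⟩ := sqrt_div_sqrt_mem_Icc hN₀ hb hd
  obtain ⟨hr₁, _⟩ := sqrt_div_sqrt_mem_Icc hN₀ hc hd
  obtain ⟨he₁, _⟩ := abs_le.1 he_le'
  refine ⟨⟨⟨by linarith, by linarith⟩, ⟨by linarith, by linarith⟩, ?_⟩, ?_⟩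
  · rw [hw]
    exact ⟨by linarith, by linarith⟩
  · have hcd : c = d * (√c / √d) ^ 2 := by
      rw [div_pow, Real.sq_sqrt (by linarith [hc.1]), Real.sq_sqrt (by linarith [hd.1])]
      field_simp [(hN₀.trans_le hd.1).ne']
    have hfactor : |2 * (√c / √d) + e| ≤ 5 := by
      rw [abs_le]
      constructor <;> linarith
    calc |c - d * (√a / √d + √b / √d - 1) ^ 2| = d * |e| * |2 * (√c / √d) + e| := by
          rw [hw, ← abs_of_pos (hN₀.trans_le hd.1), ← abs_mul, ← abs_mul,
            abs_of_pos (hN₀.trans_le hd.1), ← abs_neg]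
          congr 1
          linear_combination -hcd
      _ ≤ 2 * N * (1 / (100 * N ^ 2)) * 5 := by gcongr; exact hd.2
      _ = 1 / (10 * N) := by field_simp; norm_num

lemma mem_plate_sqrtCone {θ : ℝ × ℝ} (hθ : θ ∈ sqrtParams) {c d M δ : ℝ} (hd : |d| ≤ M)
    (hδ : δ ≤ 1) (hc : |c - d * (θ.1 + θ.2 - 1) ^ 2| ≤ δ) :
    (![d * θ.1 ^ 2, d * θ.2 ^ 2, c], d) ∈
      plate (sqrtConePoint θ) (sqrtConeNormal θ) M 1 (2 * δ) := by
  obtain ⟨hs, ht, hw⟩ := hθ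
  have hs₀ : θ.1 ≠ 0 := by linarith [hs.1]
  have ht₀ : θ.2 ≠ 0 := by linarith [ht.1]
  have hw₀ : 0 < θ.1 + θ.2 - 1 := by linarith [hw.1]
  refine ⟨hd, norm_fin_three_le_iff.2 ⟨?_, ?_, hc.trans hδ⟩, ?_⟩
  · simp [sqrtConePoint]
  · simp [sqrtConePoint]
  · have : pairing (sqrtConeNormal θ, 1) (![d * θ.1 ^ 2, d * θ.2 ^ 2, c], d) =
        (c - d * (θ.1 + θ.2 - 1) ^ 2) / (θ.1 + θ.2 - 1) := by
      simp only [pairing_apply, sqrtConeNormal, dotProduct, Fin.sum_univ_three, Matrix.cons_val]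
      field_simp
      ring
    rw [this, abs_div, abs_of_pos hw₀, div_le_iff₀ hw₀]
    nlinarith [hw.1, (abs_nonneg _).trans hc]

/-- The integer point `(![a, b, c], d)` of a quadruple `((a, b), (c, d))`. -/
def quadrupleVec (z : (ℕ × ℕ) × (ℕ × ℕ)) : (Fin 3 → ℤ) × ℤ := (![z.1.1, z.1.2, z.2.1], z.2.2)

lemma quadrupleVec_injective : Function.Injective quadrupleVec := by
  rintro ⟨⟨a, b⟩, c, d⟩ ⟨⟨a', b'⟩, c', d'⟩ h
  simpa [quadrupleVec, and_assoc] using h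

lemma quadrupleVec_mem_nearCone {J : ℕ} (hJ : 2 ^ J ≤ N) (hJ' : N < 2 ^ (J + 1))
    {z : (ℕ × ℕ) × (ℕ × ℕ)} (hz : z ∈ (dyadic N ×ˢ dyadic N) ×ˢ (dyadic N ×ˢ dyadic N))
    (h : |√z.1.1 + √z.1.2 - (√z.2.1 + √z.2.2)| ≤ 1 / (100 * (N * √N))) :
    quadrupleVec z ∈ nearCone sqrtParams sqrtConePoint sqrtConeNormal J := by
  obtain ⟨⟨a, b⟩, c, d⟩ := z
  have hN : 1 ≤ N := (one_le_pow₀ one_le_two).trans hJ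
  have hN₀ : 0 < N := by linarith
  have mem_Icc {n : ℕ} (hn : n ∈ dyadic N) : (n : ℝ) ∈ Set.Icc N (2 * N) :=
    ⟨((mem_dyadic hN₀.le).1 hn).1.le, ((mem_dyadic hN₀.le).1 hn).2⟩
  simp only [mem_product] at hz
  obtain ⟨⟨ha, hb⟩, hc, hd⟩ := hz
  obtain ⟨hθ, hcd⟩ := mem_sqrtParams_and_abs_sub_le hN (mem_Icc ha) (mem_Icc hb) (mem_Icc hc)
    (mem_Icc hd) h
  have hd₀ : (0 : ℝ) < d := hN₀.trans_le (mem_Icc hd).1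
  have hδ : 1 / (10 * N) ≤ 1 := div_le_one_of_le₀ (by linarith) (by positivity)
  have hM : |(d : ℝ)| ≤ 4 * 2 ^ J := by
    rw [abs_of_pos hd₀]
    rw [pow_succ] at hJ'
    linarith [(mem_Icc hd).2]
  have mul_div_sq (n : ℕ) : (d : ℝ) * (√n / √d) ^ 2 = n := by
    rw [div_pow, Real.sq_sqrt n.cast_nonneg, Real.sq_sqrt d.cast_nonneg,
      mul_div_cancel₀ _ hd₀.ne']
  refine ⟨?_, _, hθ, ?_⟩
  · have : (2 : ℝ) ^ J ≤ d := hJ.trans (mem_Icc hd).1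
    simp only [quadrupleVec]
    exact_mod_cast this
  · have hcast : castPoint ℝ (quadrupleVec ((a, b), c, d)) =
        (![d * (√a / √d) ^ 2, d * (√b / √d) ^ 2, c], (d : ℝ)) := by
      rw [mul_div_sq, mul_div_sq]
      refine Prod.ext (funext fun i ↦ ?_) (by simp [quadrupleVec])
      fin_cases i <;> simp [quadrupleVec]
    rw [hcast]
    refine plate_mono le_rfl le_rfl ?_ (mem_plate_sqrtCone hθ hM hδ hcd)
    calc 2 * (1 / (10 * N)) ≤ 1 / N := by
          rw [mul_one_div, div_le_div_iff₀ (by positivity) hN₀]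
          linarith
      _ ≤ 1 / 2 ^ J := by gcongr

lemma exists_card_sqrt_energy_le {ε : ℝ} (hε : 0 < ε) : ∃ C > 0, ∀ N : ℝ, 1 ≤ N →
    #{z ∈ (dyadic N ×ˢ dyadic N) ×ˢ (dyadic N ×ˢ dyadic N) |
      |√z.1.1 + √z.1.2 - (√z.2.1 + √z.2.2)| ≤ 1 / (100 * (N * √N))} ≤ C * (N ^ 2 * N ^ ε) := by
  obtain ⟨C, hC, card_le⟩ :=
    exists_card_le_of_subset_nearCone 12 (Real.one_lt_rpow one_lt_two hε)
  refine ⟨C, hC, fun N hN ↦ ?_⟩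
  obtain ⟨J, hJ, hJ'⟩ := exists_nat_pow_near hN one_lt_two
  have pow_eq : (4 * 2 ^ ε : ℝ) ^ J = (2 ^ J) ^ 2 * (2 ^ J) ^ ε := by
    rw [mul_pow, ← Real.rpow_pow_comm zero_le_two, ← pow_mul', pow_mul]
    norm_num
  rw [← card_image_of_injective _ quadrupleVec_injective]
  refine (card_le isDualPair_sqrtCone (J := J) _ ?_).trans ?_
  · simp only [coe_image, Set.image_subset_iff, coe_filter]
    exact fun z hz ↦ quadrupleVec_mem_nearCone hJ hJ' hz.1 hz.2
  · rw [pow_eq]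
    gcongr

end Energy

section GaussianSmoothing

variable {α : Type*}

lemma sum_pow_natAbs_sub_le {r : ℝ} (hr₀ : 0 ≤ r) (hr₁ : r < 1) (I : Finset ℤ) (i : ℤ) :
    ∑ j ∈ I, r ^ (i - j).natAbs ≤ 2 / (1 - r) := by
  have sum_le (K : Finset ℤ) (hK : Set.InjOn (fun j ↦ (i - j).natAbs) K) :
      ∑ j ∈ K, r ^ (i - j).natAbs ≤ 1 / (1 - r) := by
    rw [← sum_image (f := fun n ↦ r ^ n) hK, one_div, ← tsum_geometric_of_lt_one hr₀ hr₁]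
    exact (summable_geometric_of_lt_one hr₀ hr₁).sum_le_tsum _ fun n _ ↦ by positivity
  rw [← sum_filter_add_sum_filter_not I (· ≤ i), ← one_add_one_eq_two, add_div]
  refine add_le_add (sum_le _ ?_) (sum_le _ ?_) <;>
  · intro a ha b hb hab
    simp only [coe_filter, Set.mem_ofPred_eq] at ha hb hab
    omega

lemma sum_sum_mul_mul_le_of_sum_le (I : Finset α) (n : α → ℝ) {k : α → α → ℝ} {A : ℝ}
    (hk : ∀ i j, 0 ≤ k i j) (k_comm : ∀ i j, k i j = k j i) (hA : ∀ i ∈ I, ∑ j ∈ I, k i j ≤ A) :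
    ∑ i ∈ I, ∑ j ∈ I, n i * n j * k i j ≤ A * ∑ i ∈ I, n i ^ 2 := by
  have row_le : ∑ i ∈ I, ∑ j ∈ I, n i ^ 2 * k i j ≤ A * ∑ i ∈ I, n i ^ 2 := by
    rw [mul_sum]
    refine sum_le_sum fun i hi ↦ ?_
    rw [← mul_sum, mul_comm]
    exact mul_le_mul_of_nonneg_right (hA i hi) (sq_nonneg _)
  have column_eq : ∑ i ∈ I, ∑ j ∈ I, n j ^ 2 * k i j = ∑ i ∈ I, ∑ j ∈ I, n i ^ 2 * k i j := by
    rw [sum_comm]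
    simp only [k_comm]
  calc ∑ i ∈ I, ∑ j ∈ I, n i * n j * k i j
      ≤ ∑ i ∈ I, ∑ j ∈ I, (n i ^ 2 * k i j + n j ^ 2 * k i j) / 2 := by
        gcongr with i _ j _
        nlinarith [mul_nonneg (sq_nonneg (n i - n j)) (hk i j)]
    _ = ∑ i ∈ I, ∑ j ∈ I, n i ^ 2 * k i j := by
        simp only [← sum_div, sum_add_distrib, column_eq, add_self_div_two]
    _ ≤ A * ∑ i ∈ I, n i ^ 2 := row_le

lemma sum_sum_pow_natAbs_sub_le {r : ℝ} (hr₀ : 0 ≤ r) (hr₁ : r < 1) (P : Finset α) (c : α → ℤ) :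
    ∑ x ∈ P, ∑ y ∈ P, r ^ (c x - c y).natAbs ≤
      2 / (1 - r) * #{z ∈ P ×ˢ P | c z.1 = c z.2} := by
  let n (i : ℤ) : ℝ := #{x ∈ P | c x = i}
  have sum_comp_eq (g : ℤ → ℝ) : ∑ x ∈ P, g (c x) = ∑ i ∈ P.image c, n i * g i := by
    simp only [sum_comp g c, nsmul_eq_mul, n]
  calc ∑ x ∈ P, ∑ y ∈ P, r ^ (c x - c y).natAbs
      = ∑ i ∈ P.image c, ∑ j ∈ P.image c, n i * n j * r ^ (i - j).natAbs := by
        rw [sum_comp_eq fun i ↦ ∑ y ∈ P, r ^ (i - c y).natAbs]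
        refine sum_congr rfl fun i _ ↦ ?_
        rw [sum_comp_eq fun j ↦ r ^ (i - j).natAbs, mul_sum]
        simp only [mul_assoc]
    _ ≤ 2 / (1 - r) * ∑ i ∈ P.image c, n i ^ 2 :=
        sum_sum_mul_mul_le_of_sum_le _ _ (fun _ _ ↦ by positivity)
          (fun i j ↦ by rw [← Int.natAbs_neg, neg_sub]) fun i _ ↦ sum_pow_natAbs_sub_le hr₀ hr₁ _ i
    _ = 2 / (1 - r) * #{z ∈ P ×ˢ P | c z.1 = c z.2} := by
        simp only [pow_two]
        rw [← sum_comp_eq n]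
        simp only [n, card_filter, sum_product, Nat.cast_sum, eq_comm]

lemma two_div_one_sub_exp_neg_inv_le {R : ℝ} (hR : 1 ≤ R) :
    2 / (1 - Real.exp (-R⁻¹)) ≤ 4 * R := by
  have hR₀ : 0 < R := by linarith
  have exp_lt : Real.exp (-R⁻¹) < 1 := Real.exp_lt_one_iff.2 (by simpa using hR₀)
  have exp_le : Real.exp (-R⁻¹) ≤ R / (R + 1) := by
    rw [Real.exp_neg, inv_le_comm₀ (Real.exp_pos _) (by positivity), inv_div, add_div,
      div_self hR₀.ne', one_div, add_comm]
    exact Real.add_one_le_exp _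
  rw [div_le_iff₀ (by linarith)]
  have : R * (1 - Real.exp (-R⁻¹)) ≥ R * (1 - R / (R + 1)) := by gcongr
  have : R * (1 - R / (R + 1)) = R / (R + 1) := by field_simp; ring
  have : 1 / 2 ≤ R / (R + 1) := by
    rw [div_le_div_iff₀ two_pos (by positivity)]
    linarith
  linarith

lemma exp_neg_sq_le_pow_natAbs_floor_sub {w Δ : ℝ} (hw : 0 < w) (hΔ : 0 < Δ) (x y : ℝ) :
    Real.exp (-((x - y) ^ 2 / (2 * Δ ^ 2))) ≤
      Real.exp (3 / 2) * Real.exp (-(1 + Δ / w)⁻¹) ^ (⌊x / w⌋ - ⌊y / w⌋).natAbs := by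
  have hR : 1 ≤ 1 + Δ / w := by have := div_pos hΔ hw; linarith
  have floor_sub_le : ((⌊x / w⌋ - ⌊y / w⌋).natAbs : ℝ) ≤ |x - y| / w + 1 := by
    have abs_sub_eq : |x / w - y / w| = |x - y| / w := by
      rw [← sub_div, abs_div, abs_of_pos hw]
    rw [Nat.cast_natAbs, Int.cast_abs, Int.cast_sub, ← abs_sub_eq, abs_le]
    constructor <;> linarith [Int.floor_le (x / w), Int.lt_floor_add_one (x / w),
      Int.floor_le (y / w), Int.lt_floor_add_one (y / w), neg_abs_le (x / w - y / w),
      le_abs_self (x / w - y / w)]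
  have exponent_le : ((⌊x / w⌋ - ⌊y / w⌋).natAbs : ℝ) / (1 + Δ / w) ≤ |x - y| / Δ + 1 := by
    calc ((⌊x / w⌋ - ⌊y / w⌋).natAbs : ℝ) / (1 + Δ / w)
        ≤ (|x - y| / w + 1) / (1 + Δ / w) := by gcongr
      _ = |x - y| / (w + Δ) + 1 / (1 + Δ / w) := by field_simp
      _ ≤ |x - y| / Δ + 1 := by
        gcongr
        · linarith
        · exact div_le_one_of_le₀ hR (by linarith)
  have sq_eq : (x - y) ^ 2 / (2 * Δ ^ 2) = (|x - y| / Δ) ^ 2 / 2 := by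
    rw [div_pow, sq_abs, div_div, mul_comm]
  rw [← Real.exp_nat_mul, ← Real.exp_add, Real.exp_le_exp, sq_eq, mul_neg, ← div_eq_mul_inv]
  nlinarith [sq_nonneg (|x - y| / Δ - 1)]

lemma sum_sum_exp_neg_sq_le {w Δ : ℝ} (hw : 0 < w) (hΔ : 0 < Δ) (P : Finset α) (f : α → ℝ) :
    ∑ x ∈ P, ∑ y ∈ P, Real.exp (-((f x - f y) ^ 2 / (2 * Δ ^ 2))) ≤
      4 * Real.exp (3 / 2) * (1 + Δ / w) * #{z ∈ P ×ˢ P | |f z.1 - f z.2| ≤ w} := by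
  have hR : 1 ≤ 1 + Δ / w := by have := div_pos hΔ hw; linarith
  have card_le : #{z ∈ P ×ˢ P | ⌊f z.1 / w⌋ = ⌊f z.2 / w⌋} ≤
      #{z ∈ P ×ˢ P | |f z.1 - f z.2| ≤ w} := by
    refine card_le_card (monotone_filter_right _ fun z _ hz ↦ ?_)
    have := (Int.abs_sub_lt_one_of_floor_eq_floor hz).le
    rwa [← sub_div, abs_div, abs_of_pos hw, div_le_one hw] at this
  calc ∑ x ∈ P, ∑ y ∈ P, Real.exp (-((f x - f y) ^ 2 / (2 * Δ ^ 2)))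
      ≤ Real.exp (3 / 2) * ∑ x ∈ P, ∑ y ∈ P,
          Real.exp (-(1 + Δ / w)⁻¹) ^ (⌊f x / w⌋ - ⌊f y / w⌋).natAbs := by
        simp only [mul_sum]
        gcongr
        exact exp_neg_sq_le_pow_natAbs_floor_sub hw hΔ _ _
    _ ≤ Real.exp (3 / 2) *
          (4 * (1 + Δ / w) * #{z ∈ P ×ˢ P | ⌊f z.1 / w⌋ = ⌊f z.2 / w⌋}) := by
        gcongr
        have exp_lt_one : Real.exp (-(1 + Δ / w)⁻¹) < 1 :=
          Real.exp_lt_one_iff.2 (neg_lt_zero.2 (by positivity))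
        refine (sum_sum_pow_natAbs_sub_le (Real.exp_pos _).le exp_lt_one P _).trans ?_
        gcongr
        exact two_div_one_sub_exp_neg_inv_le hR
    _ ≤ Real.exp (3 / 2) * (4 * (1 + Δ / w) * #{z ∈ P ×ˢ P | |f z.1 - f z.2| ≤ w}) := by
        gcongr
    _ = 4 * Real.exp (3 / 2) * (1 + Δ / w) * #{z ∈ P ×ˢ P | |f z.1 - f z.2| ≤ w} := by ring

lemma exists_sum_sum_exp_neg_sq_sqrt_le {ε : ℝ} (hε : 0 < ε) :
    ∃ C > 0, ∀ N Δ : ℝ, 1 ≤ N → 0 < Δ →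
      ∑ x ∈ dyadic N ×ˢ dyadic N, ∑ y ∈ dyadic N ×ˢ dyadic N,
        Real.exp (-((√x.1 + √x.2 - (√y.1 + √y.2)) ^ 2 / (2 * Δ ^ 2))) ≤
      C * ((1 + Δ * (N * √N)) * (N ^ 2 * N ^ ε)) := by
  obtain ⟨C, hC, energy_le⟩ := exists_card_sqrt_energy_le hε
  refine ⟨4 * Real.exp (3 / 2) * 100 * C, by positivity, fun N Δ hN hΔ ↦ ?_⟩
  have hw : 0 < 1 / (100 * (N * √N)) := by positivity
  refine (sum_sum_exp_neg_sq_le hw hΔ _ fun x : ℕ × ℕ ↦ √x.1 + √x.2).trans ?_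
  calc 4 * Real.exp (3 / 2) * (1 + Δ / (1 / (100 * (N * √N)))) * _
      ≤ 4 * Real.exp (3 / 2) * (100 * (1 + Δ * (N * √N))) * (C * (N ^ 2 * N ^ ε)) := by
        gcongr
        · rw [div_div_eq_mul_div, div_one]
          linarith
        · exact energy_le N hN
    _ = _ := by ring

end GaussianSmoothing

section ExponentialSums

open MeasureTheory ProbabilityTheory

variable {α β : Type*}

/-- The exponential sum over `P` with real frequencies `f`, as a function of `t`. -/
noncomputable def expSum (P : Finset α) (f : α → ℝ) (t : ℝ) : ℂ :=
  ∑ x ∈ P, Complex.exp (f x * t * Complex.I)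

lemma norm_cexp_mul_mul_I (a t : ℝ) : ‖Complex.exp (a * t * Complex.I)‖ = 1 := by
  rw [← Complex.ofReal_mul, Complex.norm_exp_ofReal_mul_I]

lemma continuous_expSum (P : Finset α) (f : α → ℝ) : Continuous (expSum P f) := by
  unfold expSum
  fun_prop

lemma norm_expSum_le (P : Finset α) (f : α → ℝ) (t : ℝ) : ‖expSum P f t‖ ≤ #P :=
  (norm_sum_le _ _).trans (by simp only [norm_cexp_mul_mul_I, sum_const, nsmul_one, le_refl])

lemma conj_expSum (P : Finset α) (f : α → ℝ) (t : ℝ) :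
    (starRingEnd ℂ) (expSum P f t) = expSum P (-f) t := by
  simp only [expSum, map_sum, ← Complex.exp_conj, map_mul, Complex.conj_ofReal, Complex.conj_I,
    Pi.neg_apply, Complex.ofReal_neg, mul_neg, neg_mul]

lemma expSum_mul_expSum (P : Finset α) (Q : Finset β) (f : α → ℝ) (g : β → ℝ) (t : ℝ) :
    expSum P f t * expSum Q g t = expSum (P ×ˢ Q) (fun z ↦ f z.1 + g z.2) t := by
  simp only [expSum, sum_mul_sum, sum_product, ← Complex.exp_add, Complex.ofReal_add, add_mul]

lemma prod_expSum {ι : Type*} [Fintype ι] [DecidableEq ι] (S : ι → Finset α) (f : ι → α → ℝ)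
    (t : ℝ) :
    ∏ j, expSum (S j) (f j) t = expSum (Fintype.piFinset S) (fun n ↦ ∑ j, f j (n j)) t := by
  simp only [expSum, prod_univ_sum, ← Complex.exp_sum, Complex.ofReal_sum, sum_mul]

lemma integrable_norm_expSum_pow (μ : Measure ℝ) [IsFiniteMeasure μ] (P : Finset α) (f : α → ℝ)
    (k : ℕ) : Integrable (fun t ↦ ‖expSum P f t‖ ^ k) μ := by
  refine .of_bound ((continuous_expSum P f).norm.pow k).aestronglyMeasurable ((#P : ℝ) ^ k)
    (.of_forall fun t ↦ ?_)
  rw [norm_pow, norm_norm]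
  exact pow_le_pow_left₀ (norm_nonneg _) (norm_expSum_le P f t) k

lemma integral_norm_expSum_pow_add_le (μ : Measure ℝ) [IsFiniteMeasure μ] (P : Finset α)
    (f : α → ℝ) (m k : ℕ) :
    ∫ t, ‖expSum P f t‖ ^ (m + k) ∂μ ≤ #P ^ m * ∫ t, ‖expSum P f t‖ ^ k ∂μ := by
  rw [← integral_const_mul]
  refine integral_mono (integrable_norm_expSum_pow μ P f _)
    ((integrable_norm_expSum_pow μ P f k).const_mul _) fun t ↦ ?_
  simp only [pow_add]
  gcongr
  exact norm_expSum_le P f t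

lemma integral_expSum_gaussianReal (P : Finset α) (f : α → ℝ) (v : NNReal) :
    ∫ t, expSum P f t ∂gaussianReal 0 v =
      ((∑ x ∈ P, Real.exp (-(v * f x ^ 2 / 2)) : ℝ) : ℂ) := by
  simp only [expSum]
  rw [integral_finsetSum]
  · push_cast
    refine sum_congr rfl fun x _ ↦ ?_
    rw [← charFun_apply_real, charFun_gaussianReal]
    congr 1
    push_cast
    ring
  · exact fun x _ ↦ .of_bound (by fun_prop) 1 (.of_forall fun t ↦ (norm_cexp_mul_mul_I _ t).le)

lemma ofReal_norm_expSum_pow_four (P : Finset α) (f : α → ℝ) (t : ℝ) :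
    ((‖expSum P f t‖ ^ 4 : ℝ) : ℂ) =
      expSum ((P ×ˢ P) ×ˢ (P ×ˢ P)) (fun z ↦ f z.1.1 + f z.1.2 - (f z.2.1 + f z.2.2)) t := by
  calc ((‖expSum P f t‖ ^ 4 : ℝ) : ℂ)
      = (expSum P f t * (starRingEnd ℂ) (expSum P f t)) ^ 2 := by
        rw [Complex.mul_conj']
        push_cast
        ring
    _ = expSum P f t * expSum P f t * (expSum P (-f) t * expSum P (-f) t) := by
        rw [conj_expSum]
        ring
    _ = _ := by
        simp only [expSum_mul_expSum, Pi.neg_apply, sub_eq_add_neg, neg_add]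

lemma integral_norm_expSum_pow_four_gaussianReal (P : Finset α) (f : α → ℝ) (v : NNReal) :
    ∫ t, ‖expSum P f t‖ ^ 4 ∂gaussianReal 0 v =
      ∑ x ∈ P ×ˢ P, ∑ y ∈ P ×ˢ P,
        Real.exp (-(v * (f x.1 + f x.2 - (f y.1 + f y.2)) ^ 2 / 2)) := by
  apply Complex.ofReal_injective
  rw [← integral_complex_ofReal]
  simp only [ofReal_norm_expSum_pow_four, integral_expSum_gaussianReal]
  rw [sum_product]

end ExponentialSums

section Holder

open MeasureTheory ProbabilityTheory

variable {ι : Type*} [Fintype ι] [Nonempty ι]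

lemma prod_le_sum_pow_card_div_card {y : ι → ℝ} (hy : ∀ j, 0 ≤ y j) :
    ∏ j, y j ≤ (∑ j, y j ^ Fintype.card ι) / Fintype.card ι := by
  have card_ne : (Fintype.card ι : ℝ) ≠ 0 := Nat.cast_ne_zero.2 Fintype.card_ne_zero
  have := Real.geom_mean_le_arith_mean_weighted univ (fun _ : ι ↦ (Fintype.card ι : ℝ)⁻¹)
    (fun j ↦ y j ^ Fintype.card ι) (fun _ _ ↦ by positivity)
    (by simp [card_ne]) fun j _ ↦ pow_nonneg (hy j) _
  simpa only [Real.pow_rpow_inv_natCast (hy _) Fintype.card_ne_zero, ← mul_sum, div_eq_inv_mul]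
    using this

lemma integral_prod_le_of_integral_pow_card_le {Ω : Type*} [MeasurableSpace Ω] {μ : Measure Ω}
    {g : ι → Ω → ℝ} {B : ι → ℝ} {K : ℝ} (hg : ∀ j ω, 0 ≤ g j ω) (hB : ∀ j, 0 < B j)
    (g_int : ∀ j, Integrable (fun ω ↦ g j ω ^ Fintype.card ι) μ)
    (hK : ∀ j, ∫ ω, g j ω ^ Fintype.card ι ∂μ ≤ K * B j ^ Fintype.card ι) :
    ∫ ω, ∏ j, g j ω ∂μ ≤ K * ∏ j, B j := by
  have card_ne : (Fintype.card ι : ℝ) ≠ 0 := Nat.cast_ne_zero.2 Fintype.card_ne_zero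
  have prod_B_nonneg : 0 ≤ ∏ j, B j := prod_nonneg fun j _ ↦ (hB j).le
  have prod_le (ω : Ω) : ∏ j, g j ω ≤ (∏ j, B j) *
      ((∑ j, g j ω ^ Fintype.card ι / B j ^ Fintype.card ι) / Fintype.card ι) := by
    have := prod_le_sum_pow_card_div_card fun j ↦ div_nonneg (hg j ω) (hB j).le
    rw [prod_div_distrib, div_le_iff₀' (prod_pos fun j _ ↦ hB j)] at this
    simpa only [div_pow] using this
  calc ∫ ω, ∏ j, g j ω ∂μ
      ≤ ∫ ω, (∏ j, B j) *
          ((∑ j, g j ω ^ Fintype.card ι / B j ^ Fintype.card ι) / Fintype.card ι) ∂μ :=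
        integral_mono_of_nonneg (.of_forall fun ω ↦ prod_nonneg fun j _ ↦ hg j ω)
          (((integrable_finsetSum _ fun j _ ↦ (g_int j).div_const _).div_const _).const_mul _)
          (.of_forall prod_le)
    _ = (∏ j, B j) *
          ((∑ j, (∫ ω, g j ω ^ Fintype.card ι ∂μ) / B j ^ Fintype.card ι) / Fintype.card ι) := by
        rw [integral_const_mul, integral_div,
          integral_finsetSum _ fun j _ ↦ (g_int j).div_const _]
        simp only [integral_div]
    _ ≤ (∏ j, B j) * ((∑ _j : ι, K) / Fintype.card ι) := by
        gcongr with j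
        exact (div_le_iff₀ (pow_pos (hB j) _)).2 (hK j)
    _ = K * ∏ j, B j := by
        rw [sum_const, card_univ, nsmul_eq_mul, mul_div_cancel_left₀ _ card_ne, mul_comm]

variable {α : Type*} [DecidableEq ι]

lemma sum_exp_neg_sq_le_of_integral_norm_expSum_pow_le {S : ι → Finset α} {f : ι → α → ℝ}
    {v : NNReal} {B : ι → ℝ} {K : ℝ} (hB : ∀ j, 0 < B j)
    (hK : ∀ j, ∫ t, ‖expSum (S j) (f j) t‖ ^ Fintype.card ι ∂gaussianReal 0 v ≤
      K * B j ^ Fintype.card ι) :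
    ∑ n ∈ Fintype.piFinset S, Real.exp (-(v * (∑ j, f j (n j)) ^ 2 / 2)) ≤ K * ∏ j, B j := by
  calc ∑ n ∈ Fintype.piFinset S, Real.exp (-(v * (∑ j, f j (n j)) ^ 2 / 2))
      = ‖∫ t, expSum (Fintype.piFinset S) (fun n ↦ ∑ j, f j (n j)) t ∂gaussianReal 0 v‖ := by
        rw [integral_expSum_gaussianReal, Complex.norm_real, Real.norm_of_nonneg]
        positivity
    _ ≤ ∫ t, ∏ j, ‖expSum (S j) (f j) t‖ ∂gaussianReal 0 v := by
        simp only [← norm_prod, prod_expSum]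
        exact norm_integral_le_integral_norm _
    _ ≤ K * ∏ j, B j :=
        integral_prod_le_of_integral_pow_card_le (fun _ _ ↦ norm_nonneg _) hB
          (fun j ↦ integrable_norm_expSum_pow _ _ _ _) hK

lemma card_filter_abs_lt_le_sum_exp_neg_sq (P : Finset α) (f : α → ℝ) {v Δ : ℝ} (hv : 0 ≤ v)
    (hvΔ : v * Δ ^ 2 ≤ 1) :
    #{x ∈ P | |f x| < Δ} ≤ Real.exp (1 / 2) * ∑ x ∈ P, Real.exp (-(v * f x ^ 2 / 2)) := by
  rw [← nsmul_one, ← sum_const, mul_sum]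
  refine (sum_le_sum fun x hx ↦ ?_).trans
    (sum_le_sum_of_subset_of_nonneg (filter_subset _ P) fun _ _ _ ↦ by positivity)
  have sq_le : f x ^ 2 ≤ Δ ^ 2 := by
    rw [← sq_abs]
    exact pow_le_pow_left₀ (abs_nonneg _) (mem_filter.1 hx).2.le 2
  rw [← Real.exp_add]
  exact Real.one_le_exp (by linarith [mul_le_mul_of_nonneg_left sq_le hv])

end Holder

section Counting

open ProbabilityTheory

/-- The bound for the count of tuples is a product of such factors, `k` being their length. -/
noncomputable def tupleFactor (k : ℕ) (ε Δ N : ℝ) : ℝ :=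
  (Δ ^ (1 / k : ℝ) * N ^ (1 - 1 / (2 * k) : ℝ) + N ^ (1 - 2 / k : ℝ)) * N ^ ε

variable {k : ℕ} {ε Δ N : ℝ}

lemma tupleFactor_pos (hΔ : 0 ≤ Δ) (hN : 0 < N) : 0 < tupleFactor k ε Δ N := by
  unfold tupleFactor
  positivity

lemma le_tupleFactor_pow (hk : 2 ≤ k) (hΔ : 0 ≤ Δ) (hN : 0 < N) :
    (Δ * (N ^ (k - 1) * √N) + N ^ (k - 2)) * N ^ (k * ε) ≤ tupleFactor k ε Δ N ^ k := by
  have k_ne : k ≠ 0 := by omega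
  have k_ne' : (k : ℝ) ≠ 0 := Nat.cast_ne_zero.2 k_ne
  have rpow_pow {x : ℝ} (hx : 0 ≤ x) (a : ℝ) : (x ^ a) ^ k = x ^ (k * a) := by
    rw [← Real.rpow_mul_natCast hx, mul_comm]
  have Δ_pow : (Δ ^ (1 / k : ℝ)) ^ k = Δ := by
    rw [rpow_pow hΔ, mul_one_div_cancel k_ne', Real.rpow_one]
  have N_pow : (N ^ (1 - 1 / (2 * k) : ℝ)) ^ k = N ^ (k - 1) * √N := by
    rw [rpow_pow hN.le, Real.sqrt_eq_rpow, ← Real.rpow_natCast, ← Real.rpow_add hN,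
      Nat.cast_sub (by omega)]
    congr 1
    field_simp
    ring
  have N_pow' : (N ^ (1 - 2 / k : ℝ)) ^ k = N ^ (k - 2) := by
    rw [rpow_pow hN.le, ← Real.rpow_natCast, Nat.cast_sub hk]
    congr 1
    field_simp
    norm_num
  rw [tupleFactor, mul_pow, rpow_pow hN.le ε]
  gcongr
  rw [← N_pow, ← N_pow']
  nth_rw 1 [← Δ_pow]
  rw [← mul_pow]
  exact pow_add_pow_le (by positivity) (by positivity) k_ne

lemma exists_integral_norm_expSum_sqrt_pow_four_le (hε : 0 < ε) :
    ∃ C > 0, ∀ (N Δ σ : ℝ) (v : NNReal), 1 ≤ N → 0 < Δ → v * Δ ^ 2 = 1 → 1 ≤ |σ| →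
      ∫ t, ‖expSum (dyadic N) (fun n ↦ σ * √n) t‖ ^ 4 ∂gaussianReal 0 v ≤
        C * ((1 + Δ * (N * √N)) * (N ^ 2 * N ^ ε)) := by
  obtain ⟨C, hC, sum_le⟩ := exists_sum_sum_exp_neg_sq_sqrt_le hε
  refine ⟨C, hC, fun N Δ σ v hN hΔ hv hσ ↦ ?_⟩
  rw [integral_norm_expSum_pow_four_gaussianReal]
  refine le_trans ?_ (sum_le N Δ hN hΔ)
  gcongr ∑ x ∈ _, ∑ y ∈ _, Real.exp (-?_) with x _ y _
  have one_le_sq : 1 ≤ σ ^ 2 := by rwa [one_le_sq_iff_one_le_abs]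
  have v_eq : (v : ℝ) = 1 / Δ ^ 2 := eq_one_div_of_mul_eq_one_left hv
  rw [← mul_add, ← mul_add, ← mul_sub, mul_pow, v_eq]
  calc (√x.1 + √x.2 - (√y.1 + √y.2)) ^ 2 / (2 * Δ ^ 2)
      ≤ σ ^ 2 * (√x.1 + √x.2 - (√y.1 + √y.2)) ^ 2 / (2 * Δ ^ 2) := by
        gcongr
        exact le_mul_of_one_le_left (sq_nonneg _) one_le_sq
    _ = 1 / Δ ^ 2 * (σ ^ 2 * (√x.1 + √x.2 - (√y.1 + √y.2)) ^ 2) / 2 := by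
        field_simp

lemma exists_integral_norm_expSum_sqrt_pow_le (hk : 4 ≤ k) (hε : 0 < ε) :
    ∃ C > 0, ∀ (N Δ σ : ℝ) (v : NNReal), 1 ≤ N → 0 < Δ → v * Δ ^ 2 = 1 → 1 ≤ |σ| →
      ∫ t, ‖expSum (dyadic N) (fun n ↦ σ * √n) t‖ ^ k ∂gaussianReal 0 v ≤
        C * tupleFactor k ε Δ N ^ k := by
  obtain ⟨m, rfl⟩ := Nat.exists_eq_add_of_le' hk
  obtain ⟨C, hC, moment_le⟩ :=
    exists_integral_norm_expSum_sqrt_pow_four_le (ε := (m + 4 : ℕ) * ε) (by positivity)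
  refine ⟨2 ^ m * C, by positivity, fun N Δ σ v hN hΔ hv hσ ↦ ?_⟩
  have hN₀ : 0 < N := by linarith
  calc ∫ t, ‖expSum (dyadic N) (fun n ↦ σ * √n) t‖ ^ (m + 4) ∂gaussianReal 0 v
      ≤ #(dyadic N) ^ m * ∫ t, ‖expSum (dyadic N) (fun n ↦ σ * √n) t‖ ^ 4 ∂gaussianReal 0 v :=
        integral_norm_expSum_pow_add_le _ _ _ m 4
    _ ≤ (2 * N) ^ m *
          (C * ((1 + Δ * (N * √N)) * (N ^ 2 * N ^ ((m + 4 : ℕ) * ε)))) := by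
        gcongr
        · exact card_dyadic_le hN₀.le
        · exact moment_le N Δ σ v hN hΔ hv hσ
    _ = 2 ^ m * C * ((Δ * (N ^ (m + 4 - 1) * √N) + N ^ (m + 4 - 2)) *
          N ^ ((m + 4 : ℕ) * ε)) := by
        simp only [Nat.reduceSubDiff]
        ring
    _ ≤ 2 ^ m * C * tupleFactor (m + 4) ε Δ N ^ (m + 4) := by
        gcongr
        exact le_tupleFactor_pow (by omega) hΔ.le hN₀

/-- The tuples of integers `n j ~ N j` for which `∑ j, σ j * √(n j)` is less than `Δ` in
absolute value. -/
def sqrtTuples {ι : Type*} [Fintype ι] (σ N : ι → ℝ) (Δ : ℝ) : Set (ι → ℕ) :=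
  {n | (∀ j, N j < n j ∧ n j ≤ 2 * N j) ∧ |∑ j, σ j * √(n j)| < Δ}

variable {ι : Type*} [Fintype ι]

lemma sqrtTuples_eq_coe_filter [DecidableEq ι] (σ : ι → ℝ) {N : ι → ℝ} (hN : ∀ j, 0 ≤ N j)
    (Δ : ℝ) :
    sqrtTuples σ N Δ =
      ↑{n ∈ Fintype.piFinset fun j ↦ dyadic (N j) | |∑ j, σ j * √(n j)| < Δ} := by
  ext n
  simp [sqrtTuples, mem_dyadic (hN _)]

lemma finite_sqrtTuples (σ : ι → ℝ) {N : ι → ℝ} (hN : ∀ j, 0 ≤ N j) (Δ : ℝ) :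
    (sqrtTuples σ N Δ).Finite := by
  classical
  rw [sqrtTuples_eq_coe_filter σ hN]
  exact finite_toSet _

theorem count_seven_tuples_general (hι : 4 ≤ Fintype.card ι) (hε : 0 < ε) :
    ∃ C > 0, ∀ (σ N : ι → ℝ) (Δ : ℝ), (∀ j, 1 ≤ |σ j|) → (∀ j, 1 ≤ N j) → 0 < Δ →
      (sqrtTuples σ N Δ).ncard ≤ C * ∏ j, tupleFactor (Fintype.card ι) ε Δ (N j) := by
  classical
  have : Nonempty ι := Fintype.card_pos_iff.1 (by omega)
  obtain ⟨K, hK, moment_le⟩ := exists_integral_norm_expSum_sqrt_pow_le hι hε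
  refine ⟨Real.exp (1 / 2) * K, by positivity, fun σ N Δ hσ hN hΔ ↦ ?_⟩
  have hN₀ (j : ι) : 0 < N j := zero_lt_one.trans_le (hN j)
  obtain ⟨v, hv⟩ : ∃ v : NNReal, v * Δ ^ 2 = 1 :=
    ⟨⟨(Δ ^ 2)⁻¹, by positivity⟩, inv_mul_cancel₀ (by positivity)⟩
  rw [sqrtTuples_eq_coe_filter σ fun j ↦ (hN₀ j).le, Set.ncard_coe_finset, mul_assoc]
  refine (card_filter_abs_lt_le_sum_exp_neg_sq _ _ v.coe_nonneg hv.le).trans ?_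
  gcongr
  exact sum_exp_neg_sq_le_of_integral_norm_expSum_pow_le
    (f := fun j (n : ℕ) ↦ σ j * √n) (fun j ↦ tupleFactor_pos hΔ.le (hN₀ j))
    fun j ↦ moment_le (N j) Δ (σ j) v (hN j) hΔ hv (hσ j)

end Counting

theorem count_seven_tuples (σ₅ σ₆ : ℝ) (h₅ : σ₅ = 1 ∨ σ₅ = -1) (h₆ : σ₆ = 1 ∨ σ₆ = -1)
    (ε : ℝ) (hε : 0 < ε) :
    ∃ C : ℝ, 0 < C ∧ ∀ (N : Fin 7 → ℝ) (Δ : ℝ), (∀ j, 2 ≤ N j) → 0 < Δ →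
      (Set.ncard {n : Fin 7 → ℕ | (∀ j, N j < (n j : ℝ) ∧ (n j : ℝ) ≤ 2 * N j) ∧
          0 < |Real.sqrt (n 0) + Real.sqrt (n 1) + Real.sqrt (n 2) + Real.sqrt (n 3) +
              σ₅ * Real.sqrt (n 4) + σ₆ * Real.sqrt (n 5) - Real.sqrt (n 6)| ∧
          |Real.sqrt (n 0) + Real.sqrt (n 1) + Real.sqrt (n 2) + Real.sqrt (n 3) +
              σ₅ * Real.sqrt (n 4) + σ₆ * Real.sqrt (n 5) - Real.sqrt (n 6)| < Δ} : ℝ) ≤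
        C * ∏ j : Fin 7,
          ((Δ ^ ((1 : ℝ) / 7) * N j ^ ((13 : ℝ) / 14) + N j ^ ((5 : ℝ) / 7)) * N j ^ ε) := by
  obtain ⟨C, hC, ncard_le⟩ := count_seven_tuples_general (ι := Fin 7) (by simp) hε
  refine ⟨C, hC, fun N Δ hN hΔ ↦ ?_⟩
  let σ : Fin 7 → ℝ := ![1, 1, 1, 1, σ₅, σ₆, -1]
  have hσ (j : Fin 7) : 1 ≤ |σ j| := by
    fin_cases j <;> simp [σ, (abs_eq zero_le_one).2 h₅, (abs_eq zero_le_one).2 h₆]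
  have factor_eq (j : Fin 7) : tupleFactor (Fintype.card (Fin 7)) ε Δ (N j) =
      (Δ ^ ((1 : ℝ) / 7) * N j ^ ((13 : ℝ) / 14) + N j ^ ((5 : ℝ) / 7)) * N j ^ ε := by
    norm_num [tupleFactor]
  simp only [← factor_eq]
  refine le_trans ?_ (ncard_le σ N Δ hσ (fun j ↦ one_le_two.trans (hN j)) hΔ)
  refine Nat.cast_le.2 (Set.ncard_le_ncard ?_
    (finite_sqrtTuples σ (fun j ↦ zero_le_two.trans (hN j)) Δ))
  rintro n ⟨hn, -, abs_lt⟩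
  refine ⟨hn, ?_⟩
  simpa [σ, Fin.sum_univ_seven, ← sub_eq_add_neg] using abs_lt
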